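/- Let Φ be a shuffle and let f be an excursion with B_f ∩ 𝔹(Φ) = ∅. Then the map g ↦ d̃_V[g], from the set of excursions equipped with the Skorokhod distance ρ to D([0,1]²) equipped with ρ₂, is continuous at f: for every ε > 0 there is η > 0 such that every excursion g with ρ(f,g) ≤ η satisfies ρ₂(d̃_V[f], d̃_V[g]) ≤ ε. -/

import Mathlib

open Set Filter Topology
open scoped Classical

noncomputable section

/-- Left limit of `f` at `t`, with the convention `f(0−) = 0`. -/
def lm (f : ℝ → ℝ) (t : ℝ) : ℝ := if t = 0 then 0 else Function.leftLim f t

/-- The jump `Δ_t(f) = f t − f(t−)`. -/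
def jump (f : ℝ → ℝ) (t : ℝ) : ℝ := f t - lm f t

/-- `inf_{[s,t]} f`. -/
def infIcc (f : ℝ → ℝ) (s t : ℝ) : ℝ := sInf (f '' Icc s t)

/-- An excursion: a càdlàg function on `[0,1]`, nonnegative, vanishing at `1` (and
extended by `0` outside `[0,1]`), all of whose jumps are nonnegative. -/
structure IsExcursion (f : ℝ → ℝ) : Prop where
  nonneg : ∀ t ∈ Icc (0:ℝ) 1, 0 ≤ f t
  zero_outside : ∀ t, t ∉ Icc (0:ℝ) 1 → f t = 0
  rightCont : ∀ t ∈ Ico (0:ℝ) 1, Tendsto f (𝓝[>] t) (𝓝 (f t))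
  leftLimEx : ∀ t ∈ Ioc (0:ℝ) 1, Tendsto f (𝓝[<] t) (𝓝 (Function.leftLim f t))
  one : f 1 = 0
  jump_nonneg : ∀ t ∈ Icc (0:ℝ) 1, 0 ≤ jump f t

/-- The genealogical relation `s ⪯_f t` : `s ≤ t` and `f(s−) ≤ inf_{[s,t]} f`. -/
def pre (f : ℝ → ℝ) (s t : ℝ) : Prop := s ≤ t ∧ lm f s ≤ infIcc f s t

/-- `x_s^t(f) = 1_{s ≤ t} · max(inf_{[s,t]} f − f(s−), 0)`. -/
def xst (f : ℝ → ℝ) (s t : ℝ) : ℝ := if s ≤ t then max (infIcc f s t - lm f s) 0 else 0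

/-- The most recent common ancestor `s ∧_f t`. -/
def mrca (f : ℝ → ℝ) (s t : ℝ) : ℝ := sSup {r : ℝ | 0 ≤ r ∧ pre f r s ∧ pre f r t}

/-- `δ_t(a,b) = min(|a−b|, Δ_t(f) − |a−b|)`, the circle pseudo-distance on `[0, Δ_t(f)]`. -/
def cdel (f : ℝ → ℝ) (t a b : ℝ) : ℝ := min |a - b| (jump f t - |a - b|)

/-- `d_O(s,t) = ∑_{s ≺_f r ⪯_f t} δ_r(0, x_r^t)`. -/
def dO (f : ℝ → ℝ) (s t : ℝ) : ℝ :=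
  ∑' r : ℝ, if pre f s r ∧ s < r ∧ pre f r t then cdel f r 0 (xst f r t) else 0

/-- `d_T(s,t) = f t − inf_{[s,t]} f − ∑_{s ≺_f r ⪯_f t} x_r^t`, intended for `s ⪯_f t`. -/
def dTanc (f : ℝ → ℝ) (s t : ℝ) : ℝ :=
  f t - infIcc f s t - ∑' r : ℝ, if pre f s r ∧ s < r ∧ pre f r t then xst f r t else 0

/-- The looptree pseudo-distance `d_L[f]`. -/
def dL (f : ℝ → ℝ) (s t : ℝ) : ℝ :=
  cdel f (mrca f s t) (xst f (mrca f s t) s) (xst f (mrca f s t) t)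
    + dO f (mrca f s t) s + dO f (mrca f s t) t

/-- The tree pseudo-distance `d_T[f]`. -/
def dT (f : ℝ → ℝ) (s t : ℝ) : ℝ := dTanc f (mrca f s t) s + dTanc f (mrca f s t) t

/-- The vernation pseudo-distance `d_V[f] = d_T[f] + 2·d_L[f]`. -/
def dV (f : ℝ → ℝ) (s t : ℝ) : ℝ := dT f s t + 2 * dL f s t

/-- `Jf(t) = ∑_{r ⪯_f t} x_r^t(f)`. -/
def Jop (f : ℝ → ℝ) (t : ℝ) : ℝ := ∑' r : ℝ, if pre f r t then xst f r t else 0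

/-- `J^ε f(t) = ∑_{r ⪯_f t, Δ_r(f) ≥ ε} x_r^t(f)`. -/
def Jeps (f : ℝ → ℝ) (ε : ℝ) (t : ℝ) : ℝ :=
  ∑' r : ℝ, if pre f r t ∧ ε ≤ jump f r then xst f r t else 0

/-- Pure jump growth (PJG) excursion: `f(t) = ∑_{r ⪯_f t} x_r^t(f)` on `[0,1]`. -/
def IsPJG (f : ℝ → ℝ) : Prop := ∀ t ∈ Icc (0:ℝ) 1, f t = Jop f t

/-- An increasing bijection from `[0,1]` onto itself. -/
def IncBij (l : ℝ → ℝ) : Prop :=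
  StrictMonoOn l (Icc (0:ℝ) 1) ∧ Set.BijOn l (Icc (0:ℝ) 1) (Icc (0:ℝ) 1)

/-- The Skorokhod distance `ρ` on functions `[0,1] → ℝ`. -/
def skor (f g : ℝ → ℝ) : ℝ :=
  sInf {c : ℝ | 0 ≤ c ∧ ∃ l : ℝ → ℝ, IncBij l ∧
    ∀ x ∈ Icc (0:ℝ) 1, |l x - x| ≤ c ∧ |f x - g (l x)| ≤ c}

/-- The distance on the circle `𝒞` of perimeter 1, seen as `[0,1]` with `0 ∼ 1`. -/
def cdist (a b : ℝ) : ℝ := min |a - b| (1 - |a - b|)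

/-- A shuffle: for each `Δ > 0`, a surjective càglàd function `φ_Δ : [0,1] → 𝒞`
satisfying the two quantitative conditions of Definition 2.2. -/
structure IsShuffle (φ : ℝ → ℝ → ℝ) : Prop where
  mapsTo : ∀ Δ > (0:ℝ), ∀ x ∈ Icc (0:ℝ) 1, φ Δ x ∈ Icc (0:ℝ) 1
  surj : ∀ Δ > (0:ℝ), ∀ y ∈ Icc (0:ℝ) 1, ∃ x ∈ Icc (0:ℝ) 1, cdist (φ Δ x) y = 0
  leftCont : ∀ Δ > (0:ℝ), ∀ x ∈ Ioc (0:ℝ) 1,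
      Tendsto (fun y => cdist (φ Δ y) (φ Δ x)) (𝓝[<] x) (𝓝 0)
  rightLim : ∀ Δ > (0:ℝ), ∀ x ∈ Ico (0:ℝ) 1, ∃ L ∈ Icc (0:ℝ) 1,
      Tendsto (fun y => cdist (φ Δ y) L) (𝓝[>] x) (𝓝 0)
  bdd : ∀ Δ > (0:ℝ), ∃ M : ℝ, ∀ u ∈ Ioc (0:ℝ) Δ, ∀ x ∈ Ioc (0:ℝ) 1,
      |(2 / x) * cdist (φ u 0) (φ u x) - 1| ≤ M
  small : ∀ ν > (0:ℝ), ∃ Δ₀ > (0:ℝ), ∀ Δ : ℝ, 0 < Δ → Δ ≤ Δ₀ → ∀ x ∈ Ioc (0:ℝ) 1,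
      |(2 / x) * cdist (φ Δ 0) (φ Δ x) - 1| ≤ ν

/-- The shuffled circle pseudo-distance
`δ̃_t(a,b) = Δ_t·δ(φ_{Δ_t}(a/Δ_t), φ_{Δ_t}(b/Δ_t))`. -/
def tdel (φ : ℝ → ℝ → ℝ) (f : ℝ → ℝ) (t a b : ℝ) : ℝ :=
  if 0 < jump f t then
    jump f t * cdist (φ (jump f t) (a / jump f t)) (φ (jump f t) (b / jump f t))
  else 0

/-- `d̃_O(s,t) = ∑_{s ≺_f r ⪯_f t} δ̃_r(0, x_r^t)`. -/
def tdO (φ : ℝ → ℝ → ℝ) (f : ℝ → ℝ) (s t : ℝ) : ℝ :=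
  ∑' r : ℝ, if pre f s r ∧ s < r ∧ pre f r t then tdel φ f r 0 (xst f r t) else 0

/-- The shuffled looptree pseudo-distance `d̃_L[f]`. -/
def tdL (φ : ℝ → ℝ → ℝ) (f : ℝ → ℝ) (s t : ℝ) : ℝ :=
  tdel φ f (mrca f s t) (xst f (mrca f s t) s) (xst f (mrca f s t) t)
    + tdO φ f (mrca f s t) s + tdO φ f (mrca f s t) t

/-- The shuffled vernation pseudo-distance `d̃_V[f] = d_T[f] + 2·d̃_L[f]`. -/
def tdV (φ : ℝ → ℝ → ℝ) (f : ℝ → ℝ) (s t : ℝ) : ℝ := dT f s t + 2 * tdL φ f s t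

/-- Skorokhod distance between càglàd `𝒞`-valued functions on `[0,1]`. -/
def skorC (p q : ℝ → ℝ) : ℝ :=
  sInf {c : ℝ | 0 ≤ c ∧ ∃ l : ℝ → ℝ, IncBij l ∧
    ∀ x ∈ Icc (0:ℝ) 1, |l x - x| ≤ c ∧ cdist (p x) (q (l x)) ≤ c}

/-- The distance `ρ₂` on bivariate functions on `[0,1]²`. -/
def rho2 (p q : ℝ → ℝ → ℝ) : ℝ :=
  sInf {c : ℝ | 0 ≤ c ∧ ∃ l m : ℝ → ℝ, IncBij l ∧ IncBij m ∧
    (∀ x ∈ Icc (0:ℝ) 1, |l x - x| ≤ c ∧ |m x - x| ≤ c) ∧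
    ∀ s ∈ Icc (0:ℝ) 1, ∀ t ∈ Icc (0:ℝ) 1, |p s t - q (l s) (m t)| ≤ c}

/-- Continuity of `Δ ↦ φ_Δ` at `Δ` for the Skorokhod topology. -/
def PhiContAt (φ : ℝ → ℝ → ℝ) (Δ : ℝ) : Prop :=
  ∀ ν > (0:ℝ), ∃ κ > (0:ℝ), ∀ u : ℝ, 0 < u → |u - Δ| ≤ κ → skorC (φ u) (φ Δ) ≤ ν

/-- Continuity of the `𝒞`-valued function `p` at `x` within `[0,1]`. -/
def phiContAt (p : ℝ → ℝ) (x : ℝ) : Prop :=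
  ∀ ν > (0:ℝ), ∃ κ > (0:ℝ), ∀ y ∈ Icc (0:ℝ) 1, |y - x| ≤ κ → cdist (p y) (p x) ≤ ν

namespace IsExcursion

variable {f g : ℝ → ℝ}

theorem nonneg' (hf : IsExcursion f) (t : ℝ) : 0 ≤ f t := by
  by_cases h : t ∈ Icc (0:ℝ) 1
  · exact hf.nonneg t h
  · exact (hf.zero_outside t h).ge

theorem tendsto_right (hf : IsExcursion f) (t : ℝ) : Tendsto f (𝓝[>] t) (𝓝 (f t)) := by
  by_cases h : t ∈ Ico (0:ℝ) 1
  · exact hf.rightCont t h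
  · have h0 : f t = 0 := by
      by_cases h1 : t ∈ Icc (0:ℝ) 1
      · have : t = 1 := by
          by_contra hne
          exact h ⟨h1.1, lt_of_le_of_ne h1.2 hne⟩
        rw [this, hf.one]
      · exact hf.zero_outside t h1
    rw [h0]
    refine tendsto_const_nhds.congr' ?_
    rcases lt_or_ge t 0 with ht | ht
    · filter_upwards [Ioo_mem_nhdsGT ht] with x hx
      exact (hf.zero_outside x fun hx' => (hx'.1.trans_lt hx.2).false).symm
    · have ht1 : 1 ≤ t := by
        by_contra hlt
        exact h ⟨ht, not_le.1 hlt⟩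
      filter_upwards [self_mem_nhdsWithin] with x hx
      have hx1 : t < x := hx
      exact (hf.zero_outside x fun hx' => (ht1.trans_lt hx1).not_ge hx'.2).symm

theorem tendsto_left (hf : IsExcursion f) (t : ℝ) : Tendsto f (𝓝[<] t) (𝓝 (lm f t)) := by
  have key : (∀ᶠ x in 𝓝[<] t, f x = 0) → Tendsto f (𝓝[<] t) (𝓝 (lm f t)) := by
    intro h
    have h0 : Tendsto f (𝓝[<] t) (𝓝 0) :=
      tendsto_const_nhds.congr' (h.mono fun x hx => hx.symm)
    have : lm f t = 0 := by
      unfold lm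
      split_ifs
      · rfl
      · exact leftLim_eq_of_tendsto h0
    rwa [this]
  rcases le_or_gt t 0 with ht | ht
  · apply key
    filter_upwards [self_mem_nhdsWithin] with x hx
    exact hf.zero_outside x fun hx' => (hx'.1.trans_lt (lt_of_lt_of_le hx ht)).false
  · rcases le_or_gt t 1 with ht1 | ht1
    · have := hf.leftLimEx t ⟨ht, ht1⟩
      rwa [lm, if_neg ht.ne']
    · apply key
      filter_upwards [Ioo_mem_nhdsLT ht1] with x hx
      exact hf.zero_outside x fun hx' => (hx'.2.trans_lt hx.1).false

theorem lm_eq_of_tendsto (hf : IsExcursion f) {t y : ℝ} (h : Tendsto f (𝓝[<] t) (𝓝 y)) :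
    lm f t = y :=
  tendsto_nhds_unique (hf.tendsto_left t) h

theorem lm_nonneg (hf : IsExcursion f) (t : ℝ) : 0 ≤ lm f t :=
  ge_of_tendsto' (hf.tendsto_left t) hf.nonneg'

theorem lm_zero : lm f 0 = 0 := if_pos rfl

theorem lm_le (hf : IsExcursion f) (t : ℝ) : lm f t ≤ f t := by
  by_cases h : t ∈ Icc (0:ℝ) 1
  · exact sub_nonneg.1 (hf.jump_nonneg t h)
  · rw [hf.zero_outside t h]
    refine (hf.lm_eq_of_tendsto (tendsto_const_nhds.congr' ?_)).le
    have : ∀ᶠ x in 𝓝 t, x ∉ Icc (0:ℝ) 1 := isClosed_Icc.isOpen_compl.mem_nhds h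
    exact ((this.filter_mono nhdsWithin_le_nhds).mono fun x hx => (hf.zero_outside x hx).symm)

theorem jump_nonneg' (hf : IsExcursion f) (t : ℝ) : 0 ≤ jump f t := sub_nonneg.2 (hf.lm_le t)

theorem jump_le (hf : IsExcursion f) (t : ℝ) : jump f t ≤ f t :=
  sub_le_self _ (hf.lm_nonneg t)

theorem mem_of_jump_pos (hf : IsExcursion f) {t : ℝ} (h : 0 < jump f t) : t ∈ Ico (0:ℝ) 1 := by
  have hpos : 0 < f t := h.trans_le (hf.jump_le t)
  have hmem : t ∈ Icc (0:ℝ) 1 := by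
    by_contra hn
    exact hpos.ne' (hf.zero_outside t hn)
  refine ⟨hmem.1, lt_of_le_of_ne hmem.2 ?_⟩
  rintro rfl
  exact hpos.ne' hf.one

theorem lm_dist_le (hf : IsExcursion f) (hg : IsExcursion g) {η : ℝ}
    (h : ∀ s, |f s - g s| ≤ η) (t : ℝ) : |lm f t - lm g t| ≤ η :=
  le_of_tendsto' ((hf.tendsto_left t).sub (hg.tendsto_left t)).abs h

theorem jump_dist_le (hf : IsExcursion f) (hg : IsExcursion g) {η : ℝ}
    (h : ∀ s, |f s - g s| ≤ η) (t : ℝ) : |jump f t - jump g t| ≤ 2 * η := by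
  have h1 := abs_le.1 (hf.lm_dist_le hg h t)
  have h2 := abs_le.1 (h t)
  unfold jump
  rw [abs_le]
  constructor <;> linarith

theorem infIcc_le (hf : IsExcursion f) {s t u : ℝ} (hu : u ∈ Icc s t) : infIcc f s t ≤ f u :=
  csInf_le ⟨0, by rintro _ ⟨x, -, rfl⟩; exact hf.nonneg' x⟩ ⟨u, hu, rfl⟩

theorem le_infIcc {s t c : ℝ} (hst : s ≤ t) (h : ∀ u ∈ Icc s t, c ≤ f u) : c ≤ infIcc f s t :=
  le_csInf ⟨f s, s, ⟨le_rfl, hst⟩, rfl⟩ (by rintro _ ⟨x, hx, rfl⟩; exact h x hx)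

theorem infIcc_nonneg (hf : IsExcursion f) {s t : ℝ} (hst : s ≤ t) : 0 ≤ infIcc f s t :=
  le_infIcc hst fun u _ => hf.nonneg' u

theorem infIcc_self (f : ℝ → ℝ) (s : ℝ) : infIcc f s s = f s := by
  simp [infIcc]

theorem infIcc_le_lm (hf : IsExcursion f) {s t r : ℝ} (hr : r ∈ Ioc s t) :
    infIcc f s t ≤ lm f r := by
  refine ge_of_tendsto (hf.tendsto_left r) ?_
  filter_upwards [Ioo_mem_nhdsLT hr.1] with x hx
  exact hf.infIcc_le ⟨hx.1.le, hx.2.le.trans hr.2⟩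

theorem infIcc_split (hf : IsExcursion f) {s u t : ℝ} (hsu : s ≤ u) (hut : u ≤ t) :
    infIcc f s t = min (infIcc f s u) (infIcc f u t) := by
  apply le_antisymm
  · refine le_min (le_infIcc hsu fun v hv => hf.infIcc_le ⟨hv.1, hv.2.trans hut⟩)
      (le_infIcc hut fun v hv => hf.infIcc_le ⟨hsu.trans hv.1, hv.2⟩)
  · refine le_infIcc (hsu.trans hut) fun v hv => ?_
    rcases le_total v u with h | h
    · exact (min_le_left _ _).trans (hf.infIcc_le ⟨hv.1, h⟩)
    · exact (min_le_right _ _).trans (hf.infIcc_le ⟨h, hv.2⟩)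

theorem infIcc_anti (hf : IsExcursion f) {s u t : ℝ} (hsu : s ≤ u) (hut : u ≤ t) :
    infIcc f s t ≤ infIcc f s u := by
  rw [hf.infIcc_split hsu hut]; exact min_le_left _ _

theorem infIcc_dist_le (hf : IsExcursion f) (hg : IsExcursion g) {η : ℝ}
    (h : ∀ s, |f s - g s| ≤ η) {s t : ℝ} (hst : s ≤ t) :
    |infIcc f s t - infIcc g s t| ≤ η := by
  have h1 : infIcc f s t - η ≤ infIcc g s t := le_infIcc hst fun u hu => by
    have := hf.infIcc_le hu; have := abs_le.1 (h u); linarith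
  have h2 : infIcc g s t - η ≤ infIcc f s t := le_infIcc hst fun u hu => by
    have := hg.infIcc_le hu; have := abs_le.1 (h u); linarith
  rw [abs_le]; constructor <;> linarith

/-- For `r` fixed, the running infimum `t ↦ inf_{[r,t]} f` is continuous on `[r, ∞)`. -/
theorem continuousOn_infIcc (hf : IsExcursion f) (r : ℝ) :
    ContinuousOn (fun t => infIcc f r t) (Ici r) := by
  intro t ht
  rw [Metric.continuousWithinAt_iff]
  intro ε hε
  obtain ⟨d₁, hd₁, h₁⟩ := (Metric.tendsto_nhdsWithin_nhds.1 (hf.tendsto_right t)) (ε / 3)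
    (by positivity)
  obtain ⟨d₂, hd₂, h₂⟩ := (Metric.tendsto_nhdsWithin_nhds.1 (hf.tendsto_left t)) (ε / 3)
    (by positivity)
  refine ⟨min d₁ d₂, lt_min hd₁ hd₂, fun {u} hu hut => ?_⟩
  rw [Real.dist_eq] at hut ⊢
  have hr : r ≤ t := ht
  have hu' : r ≤ u := hu
  obtain ⟨hu1, hu2⟩ := abs_lt.1 hut
  have hm1 := min_le_left d₁ d₂
  have hm2 := min_le_right d₁ d₂
  rcases le_or_gt t u with h | h
  · have ha := hf.infIcc_anti hr h
    have hb : infIcc f r t - ε / 3 ≤ infIcc f r u := le_infIcc hu' fun v hv => by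
      rcases le_or_gt v t with hvt | hvt
      · have := hf.infIcc_le (s := r) (t := t) (u := v) ⟨hv.1, hvt⟩
        linarith
      · have h3 := hf.infIcc_le (s := r) (t := t) (u := t) ⟨hr, le_rfl⟩
        have h4 := h₁ (x := v) hvt (by
          rw [Real.dist_eq, abs_lt]; constructor <;> linarith [hv.2])
        rw [Real.dist_eq, abs_lt] at h4
        linarith
    rw [abs_lt]; constructor <;> linarith
  · have ha := hf.infIcc_anti hu' h.le
    have h5 := hf.infIcc_le (s := r) (t := u) (u := u) ⟨hu', le_rfl⟩
    have h6 := h₂ (x := u) h (by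
          rw [Real.dist_eq, abs_lt]; constructor <;> linarith)
    rw [Real.dist_eq, abs_lt] at h6
    have hb : infIcc f r u - 2 * ε / 3 ≤ infIcc f r t := le_infIcc hr fun v hv => by
      rcases le_or_gt v u with hvt | hvt
      · have := hf.infIcc_le (s := r) (t := u) (u := v) ⟨hv.1, hvt⟩
        linarith
      · rcases hv.2.eq_or_lt with rfl | hlt
        · have := hf.lm_le v
          linarith
        · have h4 := h₂ (x := v) hlt (by
            rw [Real.dist_eq, abs_lt]; constructor <;> linarith)
          rw [Real.dist_eq, abs_lt] at h4
          linarith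
    rw [abs_lt]; constructor <;> linarith

/-! ### The quantities `x_r^t` -/

theorem xst_nonneg (f : ℝ → ℝ) (r t : ℝ) : 0 ≤ xst f r t := by
  unfold xst
  split_ifs
  · exact le_max_right _ _
  · exact le_rfl

theorem xst_of_lt {r t : ℝ} (h : t < r) : xst f r t = 0 := if_neg h.not_ge

theorem xst_of_pre {r t : ℝ} (h : pre f r t) : xst f r t = infIcc f r t - lm f r := by
  rw [xst, if_pos h.1, max_eq_left (sub_nonneg.2 h.2)]

theorem xst_of_not_pre {r t : ℝ} (h : ¬ pre f r t) : xst f r t = 0 := by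
  unfold xst
  split_ifs with hrt
  · exact max_eq_right (sub_nonpos.2 (not_le.1 fun h' => h ⟨hrt, h'⟩).le)
  · rfl

theorem pre_of_xst_pos {r t : ℝ} (h : 0 < xst f r t) : pre f r t := by
  by_contra hn
  exact h.ne' (xst_of_not_pre hn)

theorem xst_self (hf : IsExcursion f) (r : ℝ) : xst f r r = jump f r := by
  rw [xst, if_pos le_rfl, infIcc_self, max_eq_left (sub_nonneg.2 (hf.lm_le r)), jump]

theorem xst_anti (hf : IsExcursion f) {r s t : ℝ} (hrs : r ≤ s) (hst : s ≤ t) :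
    xst f r t ≤ xst f r s := by
  rw [xst, if_pos (hrs.trans hst), xst, if_pos hrs]
  have := hf.infIcc_anti hrs hst
  gcongr

theorem xst_le_jump (hf : IsExcursion f) (r t : ℝ) : xst f r t ≤ jump f r := by
  rcases le_or_gt r t with h | h
  · rw [← hf.xst_self]; exact hf.xst_anti le_rfl h
  · rw [xst_of_lt h]; exact hf.jump_nonneg' r

theorem xst_dist_le (hf : IsExcursion f) (hg : IsExcursion g) {η : ℝ}
    (h : ∀ s, |f s - g s| ≤ η) (r t : ℝ) : |xst f r t - xst g r t| ≤ 2 * η := by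
  unfold xst
  split_ifs with hrt
  · have h1 := abs_le.1 (hf.infIcc_dist_le hg h hrt)
    have h2 := abs_le.1 (hf.lm_dist_le hg h r)
    refine (abs_max_sub_max_le_abs _ _ _).trans ?_
    rw [abs_le]; constructor <;> linarith
  · have := (abs_nonneg _).trans (h r)
    simpa

theorem continuousOn_xst (hf : IsExcursion f) (r : ℝ) :
    ContinuousOn (fun t => xst f r t) (Ici r) := by
  have : ContinuousOn (fun t => max (infIcc f r t - lm f r) 0) (Ici r) :=
    ((hf.continuousOn_infIcc r).sub continuousOn_const).sup continuousOn_const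
  exact this.congr fun t ht => if_pos ht

theorem xst_one (hf : IsExcursion f) (r : ℝ) : xst f r 1 = 0 := by
  unfold xst
  split_ifs with h
  · apply max_eq_right
    have h1 := hf.infIcc_le (s := r) (t := 1) (u := 1) ⟨h, le_rfl⟩
    rw [hf.one] at h1
    linarith [hf.lm_nonneg r]
  · rfl

theorem infIcc_eq_of_pre (hf : IsExcursion f) {r u t : ℝ} (hru : r < u) (h : pre f u t) :
    infIcc f r t = infIcc f r u := by
  rw [hf.infIcc_split hru.le h.1, min_eq_left]
  exact (hf.infIcc_le_lm ⟨hru, le_rfl⟩).trans h.2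

theorem xst_eq_of_pre (hf : IsExcursion f) {r u t : ℝ} (hru : r < u) (h : pre f u t) :
    xst f r t = xst f r u := by
  rw [xst, if_pos (hru.le.trans h.1), xst, if_pos hru.le, hf.infIcc_eq_of_pre hru h]

theorem sum_xst_le_lm (hf : IsExcursion f) (S : Finset ℝ) (b : ℝ) (hb : ∀ r ∈ S, r < b) :
    ∑ r ∈ S, xst f r b ≤ lm f b := by
  induction S using Finset.induction_on_max generalizing b with
  | empty => simpa using hf.lm_nonneg b
  | insert a S ha ih =>
    rw [Finset.sum_insert (fun h => (ha a h).false)]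
    have hab : a < b := hb a (Finset.mem_insert_self _ _)
    have hSb : ∀ r ∈ S, r < b := fun r hr => hb r (Finset.mem_insert_of_mem hr)
    rcases (xst_nonneg f a b).eq_or_lt with h | h
    · rw [← h, zero_add]; exact ih b hSb
    · have hpre := pre_of_xst_pos h
      have h1 : ∑ r ∈ S, xst f r b = ∑ r ∈ S, xst f r a :=
        Finset.sum_congr rfl fun r hr => hf.xst_eq_of_pre (ha r hr) hpre
      rw [h1, xst_of_pre hpre]
      have h2 := ih a ha
      have h3 := hf.infIcc_le_lm (s := a) (t := b) (r := b) ⟨hab, le_rfl⟩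
      linarith

theorem sum_xst_le (hf : IsExcursion f) (S : Finset ℝ) (t : ℝ) :
    ∑ r ∈ S, xst f r t ≤ f t := by
  induction S using Finset.induction_on_max with
  | empty => simpa using hf.nonneg' t
  | insert a S ha ih =>
    rw [Finset.sum_insert (fun h => (ha a h).false)]
    rcases (xst_nonneg f a t).eq_or_lt with h | h
    · rwa [← h, zero_add]
    · have hpre := pre_of_xst_pos h
      have h1 : ∑ r ∈ S, xst f r t = ∑ r ∈ S, xst f r a :=
        Finset.sum_congr rfl fun r hr => hf.xst_eq_of_pre (ha r hr) hpre
      rw [h1, xst_of_pre hpre]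
      have h2 := hf.sum_xst_le_lm S a ha
      have h3 := hf.infIcc_le (s := a) (t := t) (u := t) ⟨hpre.1, le_rfl⟩
      linarith

theorem summable_xst (hf : IsExcursion f) (t : ℝ) : Summable fun r => xst f r t :=
  summable_of_sum_le (fun r => xst_nonneg f r t) fun S => hf.sum_xst_le S t

theorem tsum_xst_le (hf : IsExcursion f) (t : ℝ) : ∑' r, xst f r t ≤ f t :=
  (hf.summable_xst t).tsum_le_of_sum_le fun S => hf.sum_xst_le S t

/-! ### The most recent common ancestor -/

theorem mrca_comm (f : ℝ → ℝ) (s t : ℝ) : mrca f s t = mrca f t s := by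
  unfold mrca
  congr 1
  ext r
  simp only [mem_ofPred_eq]
  tauto

theorem le_mrca {s t r : ℝ} (h0 : 0 ≤ r) (hs : pre f r s) (ht : pre f r t) :
    r ≤ mrca f s t :=
  le_csSup ⟨s, fun _ hx => hx.2.1.1⟩ ⟨h0, hs, ht⟩

theorem mrca_spec (hf : IsExcursion f) {s t : ℝ} (hs : 0 ≤ s) (ht : 0 ≤ t) :
    0 ≤ mrca f s t ∧ pre f (mrca f s t) s ∧ pre f (mrca f s t) t := by
  set A := {r : ℝ | 0 ≤ r ∧ pre f r s ∧ pre f r t} with hA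
  have h0 : (0:ℝ) ∈ A :=
    ⟨le_rfl, ⟨hs, by rw [lm_zero]; exact hf.infIcc_nonneg hs⟩,
      ⟨ht, by rw [lm_zero]; exact hf.infIcc_nonneg ht⟩⟩
  have hlub : IsLUB A (mrca f s t) := isLUB_csSup ⟨0, h0⟩ ⟨s, fun _ hx => hx.2.1.1⟩
  set m := mrca f s t
  have key : ∀ v, (∀ r ∈ A, pre f r v) → pre f m v := by
    intro v hv
    have hmv : m ≤ v := hlub.2 fun r hr => (hv r hr).1
    refine ⟨hmv, le_infIcc hmv fun u hu => ?_⟩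
    by_contra hcon
    push Not at hcon
    obtain ⟨c, hc1, hc2⟩ := exists_between hcon
    have hev := (hf.tendsto_left m).eventually (lt_mem_nhds hc2)
    obtain ⟨d, hd, hdm⟩ := (mem_nhdsLT_iff_exists_Ioo_subset).1 hev
    obtain ⟨r, hrA, hr1, hr2⟩ := hlub.exists_between hd
    have h1 := (hv r hrA).2
    have h2 := hf.infIcc_le (s := r) (t := v) (u := u) ⟨hr2.trans hu.1, hu.2⟩
    rcases hr2.eq_or_lt with h | h
    · rw [h] at h1 h2; linarith
    · have h3 : c ≤ lm f r := ge_of_tendsto (hf.tendsto_left r) (by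
        filter_upwards [Ioo_mem_nhdsLT hr1] with x hx
        exact (hdm ⟨hx.1, hx.2.trans h⟩ : c < f x).le)
      linarith
  exact ⟨hlub.1 h0, key s fun r hr => hr.2.1, key t fun r hr => hr.2.2⟩

theorem infIcc_le_infIcc_mrca (hf : IsExcursion f) {s t : ℝ} (hs : 0 ≤ s) (hst : s ≤ t) :
    infIcc f s t ≤ infIcc f (mrca f s t) s := by
  obtain ⟨hm0, hms, hmt⟩ := hf.mrca_spec hs (hs.trans hst)
  set m := mrca f s t with hm
  refine le_infIcc hms.1 fun u hu => ?_
  by_contra hcon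
  push Not at hcon
  set I := infIcc f s t
  set B := {v | v ∈ Icc m s ∧ f v < I} with hB
  have huB : u ∈ B := ⟨hu, hcon⟩
  have hlub : IsLUB B (sSup B) := isLUB_csSup ⟨u, huB⟩ ⟨s, fun v hv => hv.1.2⟩
  set r := sSup B
  have hrs : r ≤ s := hlub.2 fun v hv => hv.1.2
  have hur : u ≤ r := hlub.1 huB
  have hafter : ∀ v ∈ Ioc r t, I ≤ f v := by
    intro v hv
    rcases le_or_gt v s with h | h
    · by_contra hc
      push Not at hc
      exact (hlub.1 (show v ∈ B from ⟨⟨hu.1.trans (hur.trans hv.1.le), h⟩, hc⟩)).not_gt hv.1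
    · exact hf.infIcc_le ⟨h.le, hv.2⟩
  have hfr : I ≤ f r := by
    rcases hrs.eq_or_lt with h | h
    · rw [h]; exact hf.infIcc_le ⟨le_rfl, hst⟩
    · refine ge_of_tendsto (hf.tendsto_right r) ?_
      filter_upwards [Ioo_mem_nhdsGT h] with v hv
      exact hafter v ⟨hv.1, hv.2.le.trans hst⟩
  have hrm : m < r := by
    refine hu.1.trans_lt (lt_of_le_of_ne hur ?_)
    intro h
    rw [← h] at hfr
    exact hcon.not_ge hfr
  have hlm : lm f r ≤ I := by
    by_contra hc
    push Not at hc
    obtain ⟨d, hd, hdm⟩ := (mem_nhdsLT_iff_exists_Ioo_subset).1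
      ((hf.tendsto_left r).eventually (lt_mem_nhds hc))
    obtain ⟨v, hvB, hv1, hv2⟩ := hlub.exists_between hd
    rcases hv2.eq_or_lt with h | h
    · rw [← h] at hfr; exact hvB.2.not_ge hfr
    · exact (hvB.2.trans (hdm ⟨hv1, h⟩ : I < f v)).false
  have hpre : ∀ v, r ≤ v → v ≤ t → pre f r v := fun v hrv hvt =>
    ⟨hrv, le_infIcc hrv fun w hw => by
      rcases hw.1.eq_or_lt with h | h
      · rw [← h]; exact hf.lm_le r
      · exact hlm.trans (hafter w ⟨h, hw.2.trans hvt⟩)⟩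
  exact (le_mrca (hm0.trans hrm.le) (hpre s hrs hst) (hpre t (hrs.trans hst) le_rfl)).not_gt hrm

theorem min_infIcc_mrca (hf : IsExcursion f) {s t : ℝ} (hs : 0 ≤ s) (ht : 0 ≤ t) :
    min (infIcc f (mrca f s t) s) (infIcc f (mrca f s t) t) =
      infIcc f (min s t) (max s t) := by
  wlog hst : s ≤ t generalizing s t
  · rw [mrca_comm, min_comm, this ht hs (not_le.1 hst).le, min_comm t, max_comm t]
  obtain ⟨hm0, hms, hmt⟩ := hf.mrca_spec hs ht
  rw [min_eq_left hst, max_eq_right hst, min_eq_right (hf.infIcc_anti hms.1 hst),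
    hf.infIcc_split hms.1 hst, min_eq_right (hf.infIcc_le_infIcc_mrca hs hst)]

end IsExcursion

/-! ### The circle pseudo-distance -/

theorem cdist_self (a : ℝ) : cdist a a = 0 := by simp [cdist]

theorem cdist_comm (a b : ℝ) : cdist a b = cdist b a := by
  unfold cdist; rw [abs_sub_comm]

theorem cdist_le_half (a b : ℝ) : cdist a b ≤ 1 / 2 := by
  unfold cdist
  rcases le_total |a - b| (1 / 2) with h | h
  · exact (min_le_left _ _).trans h
  · exact (min_le_right _ _).trans (by linarith)

theorem cdist_nonneg {a b : ℝ} (ha : a ∈ Icc (0:ℝ) 1) (hb : b ∈ Icc (0:ℝ) 1) :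
    0 ≤ cdist a b := by
  refine le_min (abs_nonneg _) ?_
  have : |a - b| ≤ 1 := abs_le.2 ⟨by linarith [ha.1, hb.2], by linarith [ha.2, hb.1]⟩
  linarith

theorem cdist_triangle {a b c : ℝ} (ha : a ∈ Icc (0:ℝ) 1) (hb : b ∈ Icc (0:ℝ) 1)
    (hc : c ∈ Icc (0:ℝ) 1) : cdist a c ≤ cdist a b + cdist b c := by
  obtain ⟨ha1, ha2⟩ := ha
  obtain ⟨hb1, hb2⟩ := hb
  obtain ⟨hc1, hc2⟩ := hc
  unfold cdist
  rcases min_cases |a - b| (1 - |a - b|) with h1 | h1 <;>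
  rcases min_cases |b - c| (1 - |b - c|) with h2 | h2 <;>
  rw [h1.1, h2.1] <;>
  rcases abs_cases (a - b) with h3 | h3 <;>
  rcases abs_cases (b - c) with h4 | h4 <;>
  rcases abs_cases (a - c) with h5 | h5 <;>
  rw [min_le_iff] <;>
  first
  | (left; linarith)
  | (right; linarith)

theorem abs_cdist_sub_le {a b a' b' : ℝ} (ha : a ∈ Icc (0:ℝ) 1) (hb : b ∈ Icc (0:ℝ) 1)
    (ha' : a' ∈ Icc (0:ℝ) 1) (hb' : b' ∈ Icc (0:ℝ) 1) :
    |cdist a b - cdist a' b'| ≤ cdist a a' + cdist b b' := by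
  have h1 := cdist_triangle ha ha' hb
  have h2 := cdist_triangle ha' hb' hb
  have h3 := cdist_triangle ha' ha hb'
  have h4 := cdist_triangle ha hb hb'
  rw [cdist_comm b' b] at h2
  rw [cdist_comm a' a] at h3
  rw [abs_le]; constructor <;> linarith

/-! ### A closed formula for the shuffled vernation pseudo-distance -/

theorem div_jump_mem {f : ℝ → ℝ} (hf : IsExcursion f) {r : ℝ} (hr : 0 < jump f r) (t : ℝ) :
    xst f r t / jump f r ∈ Icc (0:ℝ) 1 :=
  ⟨div_nonneg (IsExcursion.xst_nonneg f r t) hr.le, (div_le_one hr).2 (hf.xst_le_jump r t)⟩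

theorem tdel_comm (φ : ℝ → ℝ → ℝ) (f : ℝ → ℝ) (r a b : ℝ) :
    tdel φ f r a b = tdel φ f r b a := by
  unfold tdel; rw [cdist_comm]

theorem tdel_self (φ : ℝ → ℝ → ℝ) (f : ℝ → ℝ) (r a : ℝ) : tdel φ f r a a = 0 := by
  simp [tdel, cdist_self]

/-- The contribution of the loop at `r` to the shuffled vernation pseudo-distance. -/
def loopTerm (φ : ℝ → ℝ → ℝ) (f : ℝ → ℝ) (s t r : ℝ) : ℝ :=
  2 * tdel φ f r (xst f r s) (xst f r t) - |xst f r s - xst f r t|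

section

variable {φ : ℝ → ℝ → ℝ} {f : ℝ → ℝ}

theorem tdel_nonneg (hφ : IsShuffle φ) (hf : IsExcursion f) (r s t : ℝ) :
    0 ≤ tdel φ f r (xst f r s) (xst f r t) := by
  unfold tdel
  split_ifs with h
  · exact mul_nonneg h.le (cdist_nonneg (hφ.mapsTo _ h _ (div_jump_mem hf h s))
      (hφ.mapsTo _ h _ (div_jump_mem hf h t)))
  · exact le_rfl

theorem tdel_le (hf : IsExcursion f) (r a b : ℝ) : tdel φ f r a b ≤ jump f r / 2 := by
  unfold tdel
  split_ifs with h
  · have := mul_le_mul_of_nonneg_left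
      (cdist_le_half (φ (jump f r) (a / jump f r)) (φ (jump f r) (b / jump f r))) h.le
    linarith
  · linarith [hf.jump_nonneg' r]

/-- A relative bound on `2 δ(φ(0), φ(x)) / x - 1` transfers to the loops of `f`. -/
theorem abs_two_mul_tdel_sub_le (hf : IsExcursion f) {ν r : ℝ}
    (h : 0 < jump f r → ∀ x ∈ Ioc (0:ℝ) 1,
      |(2 / x) * cdist (φ (jump f r) 0) (φ (jump f r) x) - 1| ≤ ν) (t : ℝ) :
    |2 * tdel φ f r 0 (xst f r t) - xst f r t| ≤ ν * xst f r t := by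
  rcases (IsExcursion.xst_nonneg f r t).eq_or_lt with h0 | h0
  · rw [← h0, tdel_self]; simp
  · have hJ : 0 < jump f r := h0.trans_le (hf.xst_le_jump r t)
    have hx := h hJ (xst f r t / jump f r) ⟨div_pos h0 hJ, (div_jump_mem hf hJ t).2⟩
    rw [tdel, if_pos hJ, zero_div]
    set c := cdist (φ (jump f r) 0) (φ (jump f r) (xst f r t / jump f r))
    have : 2 * (jump f r * c) - xst f r t =
        xst f r t * (2 / (xst f r t / jump f r) * c - 1) := by
      field_simp
    rw [this, abs_mul, abs_of_pos h0, mul_comm]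
    gcongr

theorem xst_cases_of_ne_mrca (hf : IsExcursion f) {s t r : ℝ} (hs : 0 ≤ s) (ht : 0 ≤ t)
    (hr : r ≠ mrca f s t) : xst f r s = xst f r t ∨ xst f r s = 0 ∨ xst f r t = 0 := by
  obtain ⟨hm0, hms, hmt⟩ := hf.mrca_spec hs ht
  rcases lt_or_gt_of_ne hr with h | h
  · left
    rw [hf.xst_eq_of_pre h hms, hf.xst_eq_of_pre h hmt]
  · right
    by_contra hcon
    push Not at hcon
    have h1 : pre f r s := by
      by_contra hn; exact hcon.1 (IsExcursion.xst_of_not_pre hn)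
    have h2 : pre f r t := by
      by_contra hn; exact hcon.2 (IsExcursion.xst_of_not_pre hn)
    exact (IsExcursion.le_mrca (hm0.trans h.le) h1 h2).not_gt h

/-- Sums over the loops split along the branches above the most recent common ancestor. -/
theorem branch_decomp (hf : IsExcursion f) {s t : ℝ} (hs : 0 ≤ s) (ht : 0 ≤ t)
    (D : ℝ → ℝ → ℝ → ℝ) (hself : ∀ r a, D r a a = 0) (hcomm : ∀ r a b, D r a b = D r b a)
    (r : ℝ) :
    D r (xst f r s) (xst f r t) =
      (if r = mrca f s t then
        D (mrca f s t) (xst f (mrca f s t) s) (xst f (mrca f s t) t) else 0) +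
      (if pre f (mrca f s t) r ∧ mrca f s t < r ∧ pre f r s then D r 0 (xst f r s) else 0) +
      (if pre f (mrca f s t) r ∧ mrca f s t < r ∧ pre f r t then D r 0 (xst f r t) else 0) := by
  obtain ⟨hm0, hms, hmt⟩ := hf.mrca_spec hs ht
  have hle : ∀ r, 0 ≤ r → pre f r s → pre f r t → r ≤ mrca f s t := fun r h h1 h2 =>
    IsExcursion.le_mrca h h1 h2
  set m := mrca f s t
  rcases lt_trichotomy r m with h | h | h
  · rw [hf.xst_eq_of_pre h hms, hf.xst_eq_of_pre h hmt, hself, if_neg h.ne,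
      if_neg fun h' => h'.2.1.not_gt h, if_neg fun h' => h'.2.1.not_gt h]
    simp
  · subst h
    simp
  · rw [if_neg h.ne', zero_add]
    have hmr : ∀ v, pre f m v → pre f r v → pre f m r := fun v h1 h2 =>
      ⟨h.le, h1.2.trans (hf.infIcc_anti h.le h2.1)⟩
    by_cases h1 : pre f r s
    · have h2 : ¬ pre f r t := fun h2 => (hle r (hm0.trans h.le) h1 h2).not_gt h
      rw [if_pos ⟨hmr s hms h1, h, h1⟩, if_neg fun h' => h2 h'.2.2,
        IsExcursion.xst_of_not_pre h2, add_zero, hcomm]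
    · rw [if_neg fun h' => h1 h'.2.2, IsExcursion.xst_of_not_pre h1, zero_add]
      by_cases h2 : pre f r t
      · rw [if_pos ⟨hmr t hmt h2, h, h2⟩]
      · rw [if_neg fun h' => h2 h'.2.2, IsExcursion.xst_of_not_pre h2, hself]

theorem exists_bound (hf : IsExcursion f) : ∃ C > 0, ∀ t, f t ≤ C := by
  have hloc : ∀ x : ℝ, ∃ c, ∀ᶠ y in 𝓝 x, f y ≤ c := by
    intro x
    have h1 := (hf.tendsto_right x).eventually (gt_mem_nhds (lt_add_one (f x)))
    have h2 := (hf.tendsto_left x).eventually (gt_mem_nhds (lt_add_one (lm f x)))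
    refine ⟨f x + 1, ?_⟩
    rw [← nhdsNE_sup_pure x, ← nhdsLT_sup_nhdsGT, eventually_sup, eventually_sup]
    refine ⟨⟨h2.mono fun y hy => ?_, h1.mono fun y hy => hy.le⟩, ?_⟩
    · linarith [hf.lm_le x]
    · rw [eventually_pure]; linarith
  have hb : ∃ c, ∀ y ∈ Icc (0:ℝ) 1, f y ≤ c := by
    refine isCompact_Icc.induction_on (p := fun S => ∃ c, ∀ y ∈ S, f y ≤ c)
      ⟨0, by simp⟩ ?_ ?_ ?_
    · rintro S T hST ⟨c, hc⟩
      exact ⟨c, fun y hy => hc y (hST hy)⟩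
    · rintro S T ⟨c, hc⟩ ⟨d, hd⟩
      exact ⟨max c d, fun y hy => hy.elim (fun h => (hc y h).trans (le_max_left _ _))
        fun h => (hd y h).trans (le_max_right _ _)⟩
    · intro x _
      obtain ⟨c, hc⟩ := hloc x
      exact ⟨{y | f y ≤ c}, mem_nhdsWithin_of_mem_nhds hc, c, fun y hy => hy⟩
  obtain ⟨c, hc⟩ := hb
  refine ⟨max c 1, by positivity, fun t => ?_⟩
  by_cases ht : t ∈ Icc (0:ℝ) 1
  · exact (hc t ht).trans (le_max_left _ _)
  · rw [hf.zero_outside t ht]; positivity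

theorem exists_tdel_bound (hφ : IsShuffle φ) (hf : IsExcursion f) :
    ∃ M ≥ 0, ∀ r t, tdel φ f r 0 (xst f r t) ≤ M * xst f r t := by
  obtain ⟨C, hC, hfC⟩ := exists_bound hf
  obtain ⟨M, hM⟩ := hφ.bdd C hC
  have hM0 : 0 ≤ M := (abs_nonneg _).trans (hM C ⟨hC, le_rfl⟩ 1 ⟨one_pos, le_rfl⟩)
  refine ⟨(M + 1) / 2, by positivity, fun r t => ?_⟩
  have := abs_two_mul_tdel_sub_le (φ := φ) hf (r := r)
    (fun h x hx => hM _ ⟨h, (hf.jump_le r).trans (hfC r)⟩ x hx) t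
  have := (abs_le.1 this).2
  linarith

theorem summable_branch_tdel (hφ : IsShuffle φ) (hf : IsExcursion f) (P : ℝ → Prop) [DecidablePred P]
    (t : ℝ) :
    Summable fun r => if P r then tdel φ f r 0 (xst f r t) else 0 := by
  obtain ⟨M, hM0, hM⟩ := exists_tdel_bound hφ hf
  have h0 : ∀ r, 0 ≤ tdel φ f r 0 (xst f r t) := fun r => by
    have := tdel_nonneg hφ hf r (r - 1) t
    rwa [IsExcursion.xst_of_lt (by linarith : r - 1 < r)] at this
  refine Summable.of_nonneg_of_le (fun r => ?_) (fun r => ?_) ((hf.summable_xst t).mul_left M)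
  · split_ifs
    · exact h0 r
    · exact le_rfl
  · split_ifs
    · exact hM r t
    · exact mul_nonneg hM0 (IsExcursion.xst_nonneg f r t)

theorem summable_branch_xst (hf : IsExcursion f) (P : ℝ → Prop) [DecidablePred P]
    (t : ℝ) :
    Summable fun r => if P r then xst f r t else 0 := by
  refine Summable.of_nonneg_of_le (fun r => ?_) (fun r => ?_) (hf.summable_xst t)
  · split_ifs
    · exact IsExcursion.xst_nonneg f r t
    · exact le_rfl
  · split_ifs
    · exact le_rfl
    · exact IsExcursion.xst_nonneg f r t

theorem hasSum_tdel (hφ : IsShuffle φ) (hf : IsExcursion f) {s t : ℝ} (hs : 0 ≤ s)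
    (ht : 0 ≤ t) :
    HasSum (fun r => tdel φ f r (xst f r s) (xst f r t)) (tdL φ f s t) := by
  rw [funext (branch_decomp hf hs ht (tdel φ f) (tdel_self φ f) (tdel_comm φ f))]
  exact ((hasSum_ite_eq _ _).add (summable_branch_tdel hφ hf _ s).hasSum).add
    (summable_branch_tdel hφ hf _ t).hasSum

theorem hasSum_abs_xst_sub (hf : IsExcursion f) {s t : ℝ} (hs : 0 ≤ s) (ht : 0 ≤ t) :
    HasSum (fun r => |xst f r s - xst f r t|)
      (f s + f t - 2 * infIcc f (min s t) (max s t) - dT f s t) := by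
  have key := fun r => branch_decomp hf hs ht (fun _ a b => |a - b|) (by simp)
    (fun _ a b => abs_sub_comm a b) r
  simp only [zero_sub, abs_neg, abs_of_nonneg (IsExcursion.xst_nonneg _ _ _)] at key
  rw [funext key]
  convert ((hasSum_ite_eq (mrca f s t) _).add (summable_branch_xst hf _ s).hasSum).add
    (summable_branch_xst hf _ t).hasSum using 1
  obtain ⟨hm0, hms, hmt⟩ := hf.mrca_spec hs ht
  rw [← hf.min_infIcc_mrca hs ht, dT, dTanc, dTanc, IsExcursion.xst_of_pre hms,
    IsExcursion.xst_of_pre hmt]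
  have : ∀ a b c : ℝ, |a - c - (b - c)| = a + b - 2 * min a b := by
    intro a b c
    rcases le_total a b with h | h
    · rw [min_eq_left h, abs_of_nonpos (by linarith)]; ring
    · rw [min_eq_right h, abs_of_nonneg (by linarith)]; ring
  rw [this]
  ring

theorem summable_loopTerm (hφ : IsShuffle φ) (hf : IsExcursion f) {s t : ℝ} (hs : 0 ≤ s)
    (ht : 0 ≤ t) : Summable (loopTerm φ f s t) :=
  (((hasSum_tdel hφ hf hs ht).mul_left 2).sub (hasSum_abs_xst_sub hf hs ht)).summable

theorem tdV_eq (hφ : IsShuffle φ) (hf : IsExcursion f) {s t : ℝ} (hs : 0 ≤ s) (ht : 0 ≤ t) :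
    tdV φ f s t =
      f s + f t - 2 * infIcc f (min s t) (max s t) + ∑' r, loopTerm φ f s t r := by
  have := (((hasSum_tdel hφ hf hs ht).mul_left 2).sub (hasSum_abs_xst_sub hf hs ht)).tsum_eq
  unfold loopTerm
  rw [this, tdV]
  ring

theorem abs_loopTerm_le_jump (hφ : IsShuffle φ) (hf : IsExcursion f) (s t r : ℝ) :
    |loopTerm φ f s t r| ≤ jump f r := by
  have h1 := tdel_nonneg hφ hf r s t
  have h2 := tdel_le (φ := φ) hf r (xst f r s) (xst f r t)
  have h3 : |xst f r s - xst f r t| ≤ jump f r := by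
    have := hf.xst_le_jump r s
    have := hf.xst_le_jump r t
    have := IsExcursion.xst_nonneg f r s
    have := IsExcursion.xst_nonneg f r t
    rw [abs_le]; constructor <;> linarith
  have := abs_nonneg (xst f r s - xst f r t)
  rw [loopTerm, abs_le]; constructor <;> linarith

theorem abs_loopTerm_le (hf : IsExcursion f) {ν : ℝ} (hν : 0 ≤ ν) {s t r : ℝ}
    (hs : 0 ≤ s) (ht : 0 ≤ t) (hr : r ≠ mrca f s t)
    (h : 0 < jump f r → ∀ x ∈ Ioc (0:ℝ) 1,
      |(2 / x) * cdist (φ (jump f r) 0) (φ (jump f r) x) - 1| ≤ ν) :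
    |loopTerm φ f s t r| ≤ ν * (xst f r s + xst f r t) := by
  have hx := IsExcursion.xst_nonneg f r s
  have hy := IsExcursion.xst_nonneg f r t
  unfold loopTerm
  rcases xst_cases_of_ne_mrca hf hs ht hr with h0 | h0 | h0
  · rw [h0, tdel_self]; simp; positivity
  · rw [h0, zero_sub, abs_neg, abs_of_nonneg hy, zero_add]
    exact abs_two_mul_tdel_sub_le hf h t
  · rw [h0, sub_zero, abs_of_nonneg hx, add_zero, tdel_comm]
    exact abs_two_mul_tdel_sub_le hf h s

/-- The loops outside a finite set `R` contribute little if they are short. -/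
theorem abs_tsum_loopTerm_sub_sum_le (hφ : IsShuffle φ) (hf : IsExcursion f) {ν κ C : ℝ}
    (hν : 0 ≤ ν) (hκ : 0 ≤ κ) (hC : ∀ t, f t ≤ C) (R : Finset ℝ)
    (hR : ∀ r ∉ R, jump f r ≤ κ)
    (h : ∀ u, 0 < u → u ≤ κ → ∀ x ∈ Ioc (0:ℝ) 1,
      |(2 / x) * cdist (φ u 0) (φ u x) - 1| ≤ ν) {s t : ℝ} (hs : 0 ≤ s) (ht : 0 ≤ t) :
    |∑' r, loopTerm φ f s t r - ∑ r ∈ R, loopTerm φ f s t r| ≤ 2 * ν * C + κ := by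
  have hsum := summable_loopTerm hφ hf hs ht
  have h1 : HasSum (fun r => loopTerm φ f s t r - if r ∈ R then loopTerm φ f s t r else 0)
      (∑' r, loopTerm φ f s t r - ∑ r ∈ R, loopTerm φ f s t r) := by
    refine hsum.hasSum.sub ?_
    have := hasSum_sum_of_ne_finset_zero (s := R) (L := SummationFilter.unconditional ℝ)
      (f := fun r => if r ∈ R then loopTerm φ f s t r else 0) (fun b hb => if_neg hb)
    rwa [Finset.sum_congr rfl fun r hr => if_pos hr] at this
  have h2 : HasSum (fun r => ν * (xst f r s + xst f r t) + if r = mrca f s t then κ else 0)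
      (ν * (∑' r, xst f r s + ∑' r, xst f r t) + κ) :=
    (((hf.summable_xst s).hasSum.add (hf.summable_xst t).hasSum).mul_left ν).add
      (hasSum_ite_eq _ _)
  have hb : ∀ r, |loopTerm φ f s t r - if r ∈ R then loopTerm φ f s t r else 0| ≤
      ν * (xst f r s + xst f r t) + if r = mrca f s t then κ else 0 := by
    intro r
    have hx := IsExcursion.xst_nonneg f r s
    have hy := IsExcursion.xst_nonneg f r t
    by_cases hrR : r ∈ R
    · rw [if_pos hrR, sub_self, abs_zero]
      split_ifs <;> positivity
    · rw [if_neg hrR, sub_zero]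
      split_ifs with hrm
      · have := (abs_loopTerm_le_jump hφ hf s t r).trans (hR r hrR)
        have : 0 ≤ ν * (xst f r s + xst f r t) := by positivity
        linarith
      · rw [add_zero]
        exact abs_loopTerm_le hf hν hs ht hrm fun hJ => h _ hJ (hR r hrR)
  have h3 : |∑' r, loopTerm φ f s t r - ∑ r ∈ R, loopTerm φ f s t r| ≤
      ν * (∑' r, xst f r s + ∑' r, xst f r t) + κ := by
    rw [abs_le]
    constructor
    · have := hasSum_le (fun r => neg_le_of_abs_le (hb r)) h2.neg h1
      exact this
    · exact hasSum_le (fun r => le_of_abs_le (hb r)) h1 h2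
  have h4 := (hf.tsum_xst_le s).trans (hC s)
  have h5 := (hf.tsum_xst_le t).trans (hC t)
  have h6 : ν * (∑' r, xst f r s + ∑' r, xst f r t) ≤ ν * (C + C) := by gcongr
  linarith

end

/-! ### Compactness and time changes -/

/-- A relation that holds locally up to separation by a single point holds uniformly up to
separation by finitely many points. -/
theorem exists_finite_separating {a b : ℝ} (Q : ℝ → ℝ → Prop) (D : ℝ → Prop)
    (S : ℝ → ℝ → ℝ → Prop)
    (h : ∀ x ∈ Icc a b, ∃ ρ > 0, ∀ u ∈ Icc a b, ∀ v ∈ Icc a b, |u - x| < ρ → |v - x| < ρ →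
      Q u v ∨ (D x ∧ S x u v)) :
    ∃ δ > 0, ∃ J : Finset ℝ, (∀ x ∈ J, x ∈ Icc a b ∧ D x) ∧
      ∀ u ∈ Icc a b, ∀ v ∈ Icc a b, |u - v| < δ → Q u v ∨ ∃ x ∈ J, S x u v := by
  choose! ρ hρ hQ using h
  obtain ⟨t, htI, htc⟩ := (isCompact_Icc (a := a) (b := b)).elim_nhds_subcover
    (fun x => Metric.ball x (ρ x)) fun x hx => Metric.ball_mem_nhds x (hρ x hx)
  obtain ⟨δ, hδ, hL⟩ := lebesgue_number_lemma_of_metric (isCompact_Icc (a := a) (b := b))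
    (c := fun x : t => Metric.ball (x : ℝ) (ρ x)) (fun _ => Metric.isOpen_ball)
    (htc.trans (iUnion₂_subset fun x hx => subset_iUnion_of_subset ⟨x, hx⟩ subset_rfl))
  refine ⟨δ, hδ, t.filter D, fun x hx => ?_, fun u hu v hv huv => ?_⟩
  · rw [Finset.mem_filter] at hx
    exact ⟨htI x hx.1, hx.2⟩
  · obtain ⟨⟨x, hx⟩, hball⟩ := hL u hu
    have h1 : |u - x| < ρ x := by
      simpa [Real.dist_eq] using hball (Metric.mem_ball_self hδ)
    have h2 : |v - x| < ρ x := by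
      have : v ∈ Metric.ball u δ := by
        rw [Metric.mem_ball, Real.dist_eq, abs_sub_comm]; exact huv
      simpa [Real.dist_eq] using hball this
    rcases hQ x (htI x hx) u hu v hv h1 h2 with h | h
    · exact Or.inl h
    · exact Or.inr ⟨x, Finset.mem_filter.2 ⟨hx, h.1⟩, h.2⟩

theorem eventually_add_lt {c d : ℝ} (h : c < d) : ∀ᶠ β in 𝓝[>] (0:ℝ), c + β < d := by
  filter_upwards [Ioo_mem_nhdsGT (sub_pos.2 h)] with β hβ
  linarith [hβ.2]

/-- A finite set of points can be displaced slightly by an increasing homeomorphism that fixes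
another finite set. -/
theorem exists_displacement (N R : Finset ℝ) (hNR : Disjoint N R) {ω : ℝ} (hω : 0 < ω) :
    ∃ ω' > 0, ∀ a : ℝ → ℝ, (∀ T ∈ N, |a T - T| ≤ ω') →
      ∃ θ : ℝ → ℝ, StrictMono θ ∧ Continuous θ ∧ (∀ x ∈ R, θ x = x) ∧
        (∀ T ∈ N, θ T = a T) ∧ ∀ x, |θ x - x| ≤ ω := by
  have hd : ∀ᶠ d in 𝓝[>] (0:ℝ), ∀ p ∈ (N ∪ R).offDiag, d ≤ |p.1 - p.2| := by
    rw [Finset.eventually_all]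
    intro p hp
    have hne : p.1 ≠ p.2 := (Finset.mem_offDiag.1 hp).2.2
    filter_upwards [Ioo_mem_nhdsGT (abs_pos.2 (sub_ne_zero.2 hne))] with d hd using hd.2.le
  obtain ⟨d, hd, hd0⟩ := (hd.and self_mem_nhdsWithin).exists
  have hd0 : 0 < d := hd0
  set n : ℝ := (N.card : ℝ) with hn
  have hn0 : 0 ≤ n := Nat.cast_nonneg _
  set b : ℝ → ℝ → ℝ := fun T x => max 0 (1 - |x - T| / d) with hb
  have hb0 : ∀ T x, 0 ≤ b T x := fun T x => le_max_left _ _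
  have hb1 : ∀ T x, b T x ≤ 1 := fun T x => max_le zero_le_one (by
    have : 0 ≤ |x - T| / d := by positivity
    linarith)
  have hbT : ∀ T, b T T = 1 := fun T => by simp [hb]
  have hbz : ∀ T ∈ N ∪ R, ∀ x ∈ N ∪ R, x ≠ T → b T x = 0 := by
    intro T hT x hx hne
    have := hd (x, T) (Finset.mem_offDiag.2 ⟨hx, hT, hne⟩)
    refine max_eq_left (sub_nonpos.2 ((one_le_div hd0).2 this))
  have hbL : ∀ T x y, |b T x - b T y| ≤ |x - y| / d := by
    intro T x y
    refine (abs_max_sub_max_le_max _ _ _ _).trans ?_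
    rw [sub_self, abs_zero, max_eq_right (abs_nonneg _)]
    have h1 : 1 - |x - T| / d - (1 - |y - T| / d) = (|y - T| - |x - T|) / d := by ring
    rw [h1, abs_div, abs_of_pos hd0]
    refine div_le_div_of_nonneg_right ?_ hd0.le
    refine (abs_abs_sub_abs_le (y - T) (x - T)).trans ?_
    rw [abs_sub_comm x y]
    apply le_of_eq
    congr 1
    ring
  refine ⟨min ω (d / 2) / (n + 1), by positivity, fun a ha => ?_⟩
  set ω' := min ω (d / 2) / (n + 1) with hω'
  have hω'0 : 0 < ω' := by positivity
  have hmul : (n + 1) * ω' = min ω (d / 2) := by rw [hω']; field_simp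
  have hs1 : n * ω' ≤ ω := by linarith [min_le_left ω (d / 2)]
  have hs2 : n * ω' ≤ d / 2 := by linarith [min_le_right ω (d / 2)]
  set θ : ℝ → ℝ := fun x => x + ∑ T ∈ N, (a T - T) * b T x with hθ
  refine ⟨θ, ?_, ?_, ?_, ?_, ?_⟩
  · intro x y hxy
    have h1 : |∑ T ∈ N, (a T - T) * b T x - ∑ T ∈ N, (a T - T) * b T y| ≤
        n * (ω' * (|x - y| / d)) := by
      rw [← Finset.sum_sub_distrib, hn, ← nsmul_eq_mul]
      refine (Finset.abs_sum_le_sum_abs _ _).trans (Finset.sum_le_card_nsmul _ _ _ ?_)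
      intro T hT
      rw [← mul_sub, abs_mul]
      exact mul_le_mul (ha T hT) (hbL T x y) (abs_nonneg _) hω'0.le
    have h2 : n * (ω' * (|x - y| / d)) ≤ (y - x) / 2 := by
      rw [abs_of_neg (sub_neg.2 hxy)]
      have h3 : n * (ω' * (-(x - y) / d)) = (n * ω') * ((y - x) / d) := by ring
      rw [h3]
      have h4 : (n * ω') * ((y - x) / d) ≤ (d / 2) * ((y - x) / d) := by
        have : 0 ≤ (y - x) / d := div_nonneg (by linarith) hd0.le
        gcongr
      refine h4.trans (le_of_eq ?_)
      field_simp
    have h5 := (abs_le.1 h1).2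
    simp only [hθ]
    linarith
  · refine continuous_id.add (continuous_finsetSum _ fun T _ => continuous_const.mul ?_)
    simp only [hb]
    fun_prop
  · intro x hx
    have : ∑ T ∈ N, (a T - T) * b T x = 0 := Finset.sum_eq_zero fun T hT => by
      rw [hbz T (Finset.mem_union_left _ hT) x (Finset.mem_union_right _ hx)
        (fun h => Finset.disjoint_left.1 hNR hT (h ▸ hx)), mul_zero]
    simp only [hθ, this, add_zero]
  · intro x hx
    have : ∑ T ∈ N, (a T - T) * b T x = a x - x := by
      rw [Finset.sum_eq_single x, hbT, mul_one]
      · intro T hT hne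
        rw [hbz T (Finset.mem_union_left _ hT) x (Finset.mem_union_left _ hx) hne.symm, mul_zero]
      · exact fun h => absurd hx h
    simp only [hθ, this]
    ring
  · intro x
    simp only [hθ, add_sub_cancel_left]
    refine le_trans ?_ hs1
    rw [hn, ← nsmul_eq_mul]
    refine (Finset.abs_sum_le_sum_abs _ _).trans (Finset.sum_le_card_nsmul _ _ _ ?_)
    intro T hT
    rw [abs_mul, abs_of_nonneg (hb0 T x)]
    exact (mul_le_of_le_one_right (abs_nonneg _) (hb1 T x)).trans (ha T hT)

theorem incBij_of_strictMono {θ : ℝ → ℝ} (h : StrictMono θ) (hc : Continuous θ) (h0 : θ 0 = 0)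
    (h1 : θ 1 = 1) : IncBij θ := by
  refine ⟨h.strictMonoOn _, fun x hx => ?_, h.injective.injOn, fun y hy => ?_⟩
  · exact ⟨h0 ▸ h.monotone hx.1, h1 ▸ h.monotone hx.2⟩
  · have := intermediate_value_Icc (zero_le_one' ℝ) hc.continuousOn
    rw [h0, h1] at this
    exact this hy

theorem IncBij.map_zero {l : ℝ → ℝ} (h : IncBij l) : l 0 = 0 := by
  obtain ⟨z, hz, hz0⟩ := h.2.surjOn (⟨le_rfl, zero_le_one⟩ : (0:ℝ) ∈ Icc (0:ℝ) 1)
  have h0 : (0:ℝ) ∈ Icc (0:ℝ) 1 := ⟨le_rfl, zero_le_one⟩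
  have h1 := h.1.monotoneOn h0 hz hz.1
  exact le_antisymm (h1.trans hz0.le) (h.2.mapsTo h0).1

theorem IncBij.map_one {l : ℝ → ℝ} (h : IncBij l) : l 1 = 1 := by
  obtain ⟨z, hz, hz1⟩ := h.2.surjOn (⟨zero_le_one, le_rfl⟩ : (1:ℝ) ∈ Icc (0:ℝ) 1)
  have h0 : (1:ℝ) ∈ Icc (0:ℝ) 1 := ⟨zero_le_one, le_rfl⟩
  have h1 := h.1.monotoneOn hz h0 hz.2
  exact le_antisymm (h.2.mapsTo h0).2 (hz1.ge.trans h1)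

theorem incBij_id : IncBij fun x => x :=
  ⟨strictMono_id.strictMonoOn _, bijOn_id _⟩

/-- An increasing bijection of `[0,1]`, extended by the identity to the whole line. -/
theorem IncBij.exists_orderIso {l : ℝ → ℝ} (h : IncBij l) :
    ∃ L : ℝ ≃o ℝ, (∀ x ∈ Icc (0:ℝ) 1, L x = l x) ∧ ∀ x ∉ Icc (0:ℝ) 1, L x = x := by
  set e : ℝ → ℝ := fun x => if x ∈ Icc (0:ℝ) 1 then l x else x with he
  have h1 : ∀ x ∈ Icc (0:ℝ) 1, e x = l x := fun x hx => if_pos hx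
  have h2 : ∀ x ∉ Icc (0:ℝ) 1, e x = x := fun x hx => if_neg hx
  have hmono : StrictMono e := by
    intro x y hxy
    by_cases hx : x ∈ Icc (0:ℝ) 1 <;> by_cases hy : y ∈ Icc (0:ℝ) 1
    · rw [h1 x hx, h1 y hy]; exact h.1 hx hy hxy
    · rw [h1 x hx, h2 y hy]
      have h3 := (h.2.mapsTo hx).2
      have h4 : 1 < y := by
        by_contra hc
        exact hy ⟨hx.1.trans hxy.le, not_lt.1 hc⟩
      exact h3.trans_lt h4
    · rw [h2 x hx, h1 y hy]
      have h3 := (h.2.mapsTo hy).1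
      have h4 : x < 0 := by
        by_contra hc
        exact hx ⟨not_lt.1 hc, hxy.le.trans hy.2⟩
      exact h4.trans_le h3
    · rwa [h2 x hx, h2 y hy]
  have hsurj : Function.Surjective e := by
    intro y
    by_cases hy : y ∈ Icc (0:ℝ) 1
    · obtain ⟨x, hx, hxy⟩ := h.2.surjOn hy
      exact ⟨x, by rw [h1 x hx, hxy]⟩
    · exact ⟨y, h2 y hy⟩
  exact ⟨hmono.orderIsoOfSurjective e hsurj, h1, h2⟩

theorem IncBij.comp {l m : ℝ → ℝ} (hl : IncBij l) (hm : IncBij m) : IncBij fun x => l (m x) :=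
  ⟨fun _ hx _ hy hxy => hl.1 (hm.2.mapsTo hx) (hm.2.mapsTo hy) (hm.1 hx hy hxy),
    hl.2.comp hm.2⟩

/-- An excursion has finitely many jumps outside of which its oscillation is uniformly small. -/
theorem exists_jump_partition {f : ℝ → ℝ} (hf : IsExcursion f) {ε : ℝ} (hε : 0 < ε) :
    ∃ δ > 0, ∃ R : Finset ℝ, (∀ r ∈ R, 0 < jump f r) ∧ (∀ r ∉ R, jump f r ≤ ε) ∧
      ∀ u ∈ Icc (0:ℝ) 1, ∀ v ∈ Icc (0:ℝ) 1, |u - v| < δ →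
        |f u - f v| < ε ∨ ∃ r ∈ R, (u < r ∧ r ≤ v) ∨ (v < r ∧ r ≤ u) := by
  obtain ⟨δ, hδ, R, hR, hsep⟩ := exists_finite_separating (a := -1) (b := 2)
    (fun u v => |f u - f v| < ε) (fun x => 0 < jump f x)
    (fun x u v => (u < x ∧ x ≤ v) ∨ (v < x ∧ x ≤ u)) (by
      intro x _
      obtain ⟨d₁, hd₁, h₁⟩ := (Metric.tendsto_nhdsWithin_nhds.1 (hf.tendsto_right x)) (ε / 3)
        (by positivity)
      obtain ⟨d₂, hd₂, h₂⟩ := (Metric.tendsto_nhdsWithin_nhds.1 (hf.tendsto_left x)) (ε / 3)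
        (by positivity)
      refine ⟨min d₁ d₂, lt_min hd₁ hd₂, fun u _ v _ hu hv => ?_⟩
      have hr : ∀ w, |w - x| < min d₁ d₂ → x ≤ w → |f w - f x| < ε / 3 := by
        intro w hw hxw
        rcases hxw.eq_or_lt with h | h
        · rw [h]; simpa using hε
        · exact h₁ h (hw.trans_le (min_le_left _ _))
      have hl : ∀ w, |w - x| < min d₁ d₂ → w < x → |f w - lm f x| < ε / 3 := by
        intro w hw hxw
        exact h₂ hxw (hw.trans_le (min_le_right _ _))
      have hclose : ∀ {y z c : ℝ}, |y - c| < ε / 3 → |z - c| < ε / 3 → |y - z| < ε := by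
        intro y z c hy hz
        rw [abs_lt] at hy hz ⊢
        constructor <;> linarith
      rcases (hf.jump_nonneg' x).eq_or_lt with h0 | h0
      · have hlm : lm f x = f x := (sub_eq_zero.1 h0.symm).symm
        rw [hlm] at hl
        left
        apply hclose (c := f x)
        · exact (le_or_gt x u).elim (hr u hu) (hl u hu)
        · exact (le_or_gt x v).elim (hr v hv) (hl v hv)
      · rcases le_or_gt x u with hxu | hxu <;> rcases le_or_gt x v with hxv | hxv
        · exact Or.inl (hclose (hr u hu hxu) (hr v hv hxv))
        · exact Or.inr ⟨h0, Or.inr ⟨hxv, hxu⟩⟩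
        · exact Or.inr ⟨h0, Or.inl ⟨hxu, hxv⟩⟩
        · exact Or.inl (hclose (hl u hu hxu) (hl v hv hxv)))
  refine ⟨δ, hδ, R, fun r hr => (hR r hr).2, fun x hx => ?_, fun u hu v hv =>
    hsep u ⟨by linarith [hu.1], by linarith [hu.2]⟩ v ⟨by linarith [hv.1], by linarith [hv.2]⟩⟩
  rcases (hf.jump_nonneg' x).eq_or_lt with h0 | h0
  · rw [← h0]; exact hε.le
  have hx1 := hf.mem_of_jump_pos h0
  have hev : ∀ᶠ u in 𝓝[<] x, ∀ y ∈ R, y < x → y < u := by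
    rw [Finset.eventually_all]
    intro y _
    by_cases hyx : y < x
    · filter_upwards [Ioo_mem_nhdsLT hyx] with u hu _ using hu.1
    · exact Eventually.of_forall fun u h => absurd h hyx
  refine le_of_tendsto ((tendsto_const_nhds (x := f x)).sub (hf.tendsto_left x)) ?_
  have h1 : max (-1) (x - δ) < x := max_lt (by linarith [hx1.1]) (by linarith)
  filter_upwards [hev, Ioo_mem_nhdsLT h1] with u hu hu'
  have hu1 := (le_max_left _ _).trans_lt hu'.1
  have hu2 := (le_max_right _ _).trans_lt hu'.1
  have hux : u < x := hu'.2
  rcases hsep u ⟨hu1.le, by linarith [hx1.2]⟩ x ⟨by linarith [hx1.1], by linarith [hx1.2]⟩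
    (by rw [abs_lt]; constructor <;> linarith) with h | ⟨y, hy, h | h⟩
  · linarith [(abs_lt.1 h).1]
  · rcases h.2.eq_or_lt with h' | h'
    · exact absurd (h' ▸ hy) hx
    · exact absurd (hu y hy h') h.1.not_gt
  · linarith [h.1, h.2]

theorem exists_of_skor_lt {f g : ℝ → ℝ} (hf : IsExcursion f) (hg : IsExcursion g) {c : ℝ}
    (h : skor f g < c) : ∃ l, IncBij l ∧
      ∀ x ∈ Icc (0:ℝ) 1, |l x - x| ≤ c ∧ |f x - g (l x)| ≤ c := by
  obtain ⟨C, hC, hfC⟩ := exists_bound hf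
  obtain ⟨D, hD, hgD⟩ := exists_bound hg
  obtain ⟨b, ⟨-, l, hl, hb⟩, hbc⟩ := exists_lt_of_csInf_lt (by
    refine ⟨C + D, by positivity, fun x => x, incBij_id, fun x _ => ⟨?_, ?_⟩⟩
    · rw [sub_self, abs_zero]; positivity
    · have := hf.nonneg' x
      have := hg.nonneg' x
      have := hfC x
      have := hgD x
      rw [abs_le]; constructor <;> linarith) h
  exact ⟨l, hl, fun x hx => ⟨(hb x hx).1.trans hbc.le, (hb x hx).2.trans hbc.le⟩⟩

theorem exists_of_skorC_lt {p q : ℝ → ℝ} {c : ℝ} (h : skorC p q < c) : ∃ l, IncBij l ∧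
      ∀ x ∈ Icc (0:ℝ) 1, |l x - x| ≤ c ∧ cdist (p x) (q (l x)) ≤ c := by
  obtain ⟨b, ⟨-, l, hl, hb⟩, hbc⟩ := exists_lt_of_csInf_lt (by
    refine ⟨1, zero_le_one, fun x => x, incBij_id, fun x _ => ⟨?_, ?_⟩⟩
    · rw [sub_self, abs_zero]; exact zero_le_one
    · linarith [cdist_le_half (p x) (q x)]) h
  exact ⟨l, hl, fun x hx => ⟨(hb x hx).1.trans hbc.le, (hb x hx).2.trans hbc.le⟩⟩

/-- A shuffle map has finitely many discontinuities outside of which its oscillation is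
uniformly small. -/
theorem exists_shuffle_partition {φ : ℝ → ℝ → ℝ} (hφ : IsShuffle φ) {Δ : ℝ} (hΔ : 0 < Δ)
    {ε : ℝ} (hε : 0 < ε) :
    ∃ δ > 0, ∃ J : Finset ℝ, (∀ x ∈ J, x ∈ Ioo (0:ℝ) 1 ∧ ¬ phiContAt (φ Δ) x) ∧
      ∀ u ∈ Icc (0:ℝ) 1, ∀ v ∈ Icc (0:ℝ) 1, |u - v| < δ →
        cdist (φ Δ u) (φ Δ v) < ε ∨ ∃ x ∈ J, (u ≤ x ∧ x < v) ∨ (v ≤ x ∧ x < u) := by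
  have hmap := hφ.mapsTo Δ hΔ
  have h0 : phiContAt (φ Δ) 0 := by
    intro ν hν
    obtain ⟨M, hM⟩ := hφ.bdd Δ hΔ
    have hM0 : 0 ≤ M := (abs_nonneg _).trans (hM Δ ⟨hΔ, le_rfl⟩ 1 ⟨one_pos, le_rfl⟩)
    refine ⟨ν / (M + 1), by positivity, fun y hy hyν => ?_⟩
    rcases hy.1.eq_or_lt with h | h
    · rw [← h, cdist_self]; exact hν.le
    · have h1 := (abs_le.1 (hM Δ ⟨hΔ, le_rfl⟩ y ⟨h, hy.2⟩)).2
      rw [sub_zero, abs_of_pos h, le_div_iff₀ (by positivity)] at hyν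
      rw [cdist_comm]
      have h2 : 2 / y * cdist (φ Δ 0) (φ Δ y) ≤ M + 1 := by linarith
      rw [div_mul_eq_mul_div, div_le_iff₀ h] at h2
      have := cdist_nonneg (hmap 0 ⟨le_rfl, zero_le_one⟩) (hmap y hy)
      linarith
  have hleft : ∀ x ∈ Ioc (0:ℝ) 1, ∀ ν > 0, ∃ d > 0, ∀ y, y ≤ x → |y - x| < d →
      cdist (φ Δ y) (φ Δ x) < ν := by
    intro x hx ν hν
    have hev := (hφ.leftCont Δ hΔ x hx).eventually (gt_mem_nhds hν)
    obtain ⟨c, hc, hcx⟩ := (mem_nhdsLT_iff_exists_Ioo_subset).1 hev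
    have hc : c < x := hc
    refine ⟨x - c, sub_pos.2 hc, fun y hy hyd => ?_⟩
    rcases hy.eq_or_lt with h | h
    · rw [h, cdist_self]; exact hν
    · rw [abs_lt] at hyd
      exact hcx ⟨by linarith, h⟩
  have h1 : phiContAt (φ Δ) 1 := by
    intro ν hν
    obtain ⟨d, hd, h⟩ := hleft 1 ⟨one_pos, le_rfl⟩ ν hν
    exact ⟨d / 2, by positivity, fun y hy hyd => (h y hy.2 (by linarith)).le⟩
  obtain ⟨δ, hδ, J, hJ, hsep⟩ := exists_finite_separating (a := 0) (b := 1)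
    (fun u v => cdist (φ Δ u) (φ Δ v) < ε) (fun x => ¬ phiContAt (φ Δ) x)
    (fun x u v => (u ≤ x ∧ x < v) ∨ (v ≤ x ∧ x < u)) (by
      intro x hx
      have hclose : ∀ {y z c : ℝ}, y ∈ Icc (0:ℝ) 1 → z ∈ Icc (0:ℝ) 1 → c ∈ Icc (0:ℝ) 1 →
          cdist y c < ε / 2 → cdist z c < ε / 2 → cdist y z < ε := by
        intro y z c hy hz hc h1 h2
        have := cdist_triangle hy hc hz
        rw [cdist_comm c z] at this
        linarith
      by_cases hc : phiContAt (φ Δ) x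
      · obtain ⟨κ, hκ, h⟩ := hc (ε / 3) (by positivity)
        refine ⟨κ, hκ, fun u hu v hv hux hvx => Or.inl ?_⟩
        have h3 := h u hu hux.le
        have h4 := h v hv hvx.le
        exact hclose (hmap u hu) (hmap v hv) (hmap x hx) (by linarith) (by linarith)
      · have hx0 : 0 < x := lt_of_le_of_ne hx.1 fun h => hc (h ▸ h0)
        have hx1 : x < 1 := lt_of_le_of_ne hx.2 fun h => hc (h ▸ h1)
        obtain ⟨d, hd, hdl⟩ := hleft x ⟨hx0, hx.2⟩ (ε / 2) (by positivity)
        obtain ⟨L, hL, hlim⟩ := hφ.rightLim Δ hΔ x ⟨hx.1, hx1⟩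
        obtain ⟨c, hcx, hcr⟩ := (mem_nhdsGT_iff_exists_Ioo_subset).1
          (hlim.eventually (gt_mem_nhds (half_pos hε)))
        have hcx : x < c := hcx
        refine ⟨min d (c - x), lt_min hd (sub_pos.2 hcx), fun u hu v hv hux hvx => ?_⟩
        have hr : ∀ y, |y - x| < min d (c - x) → x < y → cdist (φ Δ y) L < ε / 2 := by
          intro y hy hxy
          have := (abs_lt.1 (hy.trans_le (min_le_right _ _))).2
          exact hcr ⟨hxy, by linarith⟩
        have hl : ∀ y, |y - x| < min d (c - x) → y ≤ x →
            cdist (φ Δ y) (φ Δ x) < ε / 2 :=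
          fun y hy hyx => hdl y hyx (hy.trans_le (min_le_left _ _))
        rcases le_or_gt u x with h | h <;> rcases le_or_gt v x with h' | h'
        · exact Or.inl (hclose (hmap u hu) (hmap v hv) (hmap x hx) (hl u hux h) (hl v hvx h'))
        · exact Or.inr ⟨hc, Or.inl ⟨h, h'⟩⟩
        · exact Or.inr ⟨hc, Or.inr ⟨h', h⟩⟩
        · exact Or.inl (hclose (hmap u hu) (hmap v hv) hL (hr u hux h) (hr v hvx h')))
  refine ⟨δ, hδ, J, fun x hx => ⟨⟨?_, ?_⟩, (hJ x hx).2⟩, hsep⟩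
  · exact lt_of_le_of_ne (hJ x hx).1.1 fun h => (hJ x hx).2 (h ▸ h0)
  · exact lt_of_le_of_ne (hJ x hx).1.2 fun h => (hJ x hx).2 (h ▸ h1)

theorem exists_first_hit {g : ℝ → ℝ} (hg : IsExcursion g) {r z : ℝ} (hr : r ≤ 1)
    (hz : 0 ≤ z) : ∃ a, r ≤ a ∧ ∀ s, r ≤ s → (xst g r s ≤ z ↔ a ≤ s) := by
  set A := Ici r ∩ (fun s => xst g r s) ⁻¹' Iic z with hA
  have hcl : IsClosed A := (hg.continuousOn_xst r).preimage_isClosed_of_isClosed isClosed_Ici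
    isClosed_Iic
  have hne : A.Nonempty := ⟨1, hr, by simpa [hg.xst_one] using hz⟩
  have hbd : BddBelow A := ⟨r, fun s hs => hs.1⟩
  have hmem := hcl.csInf_mem hne hbd
  refine ⟨sInf A, hmem.1, fun s hs => ⟨fun h => csInf_le hbd ⟨hs, h⟩, fun h => ?_⟩⟩
  exact (hg.xst_anti hmem.1 h).trans hmem.2

theorem abs_xst_div_jump_sub_le {f g : ℝ → ℝ} (hf : IsExcursion f) (hg : IsExcursion g)
    {η r : ℝ} (h : ∀ s, |f s - g s| ≤ η) (hJ : 0 < jump f r) (hJ' : 0 < jump g r) (s : ℝ) :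
    |xst g r s / jump g r - xst f r s / jump f r| ≤ 4 * η / jump f r := by
  have h1 := hf.xst_dist_le hg h r s
  have h2 := hf.jump_dist_le hg h r
  have hy := div_jump_mem hg hJ' s
  set y := xst g r s / jump g r with hyd
  have hx : xst g r s = y * jump g r := by rw [hyd]; field_simp
  have e : y - xst f r s / jump f r =
      (y * (jump f r - jump g r) - (xst f r s - xst g r s)) / jump f r := by
    rw [hx]; field_simp; ring
  rw [e, abs_div, abs_of_pos hJ]
  refine div_le_div_of_nonneg_right ?_ hJ.le
  have h3 : |y * (jump f r - jump g r)| ≤ 2 * η := by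
    rw [abs_mul, abs_of_nonneg hy.1]
    exact (mul_le_of_le_one_left (abs_nonneg _) hy.2).trans h2
  linarith [abs_sub (y * (jump f r - jump g r)) (xst f r s - xst g r s)]

/-- Around a loop of `f` at `r`, the positions of nearby excursions on their loop at `r` follow
those of `f` in the shuffled circle, up to a time change that is prescribed at finitely many
times only. -/
theorem exists_loop_tracking {φ : ℝ → ℝ → ℝ} (hφ : IsShuffle φ) {f : ℝ → ℝ}
    (hf : IsExcursion f) {r : ℝ} (hJ : 0 < jump f r) (hc : PhiContAt φ (jump f r))
    (hu : ∀ s ∈ Icc (0:ℝ) 1, ∀ t ∈ Icc (0:ℝ) 1, s ≠ t → xst f r s = xst f r t →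
      0 < xst f r t → phiContAt (φ (jump f r)) (xst f r t / jump f r))
    {ε : ℝ} (hε : 0 < ε) :
    ∃ N : Finset ℝ, (∀ T ∈ N, r < T ∧ T < 1 ∧ 0 < xst f r T ∧
        ∀ s ∈ Icc (0:ℝ) 1, xst f r s = xst f r T → s = T) ∧
      ∃ ω > 0, ∀ ω' > 0, ∀ᶠ η in 𝓝[>] (0:ℝ), ∀ g, IsExcursion g → (∀ s, |f s - g s| ≤ η) →
        0 < jump g r ∧ ∃ a : ℝ → ℝ, (∀ T ∈ N, |a T - T| ≤ ω') ∧
          ∀ θ : ℝ → ℝ, StrictMono θ → θ r = r → MapsTo θ (Icc 0 1) (Icc 0 1) →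
            (∀ T ∈ N, θ T = a T) → (∀ x, |θ x - x| ≤ ω) → ∀ s ∈ Icc (0:ℝ) 1,
              |xst f r s - xst g r (θ s)| ≤ ε ∧
              cdist (φ (jump f r) (xst f r s / jump f r))
                (φ (jump g r) (xst g r (θ s) / jump g r)) ≤ ε := by
  set Δ := jump f r with hΔ
  obtain ⟨hr0, hr1⟩ := hf.mem_of_jump_pos hJ
  obtain ⟨δ, hδ, J, hJd, hsep⟩ := exists_shuffle_partition hφ hJ (half_pos hε)
  have hcont : ContinuousOn (fun t => xst f r t) (Icc r 1) :=
    (hf.continuousOn_xst r).mono Icc_subset_Ici_self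
  have hT : ∀ x ∈ J, ∃ T ∈ Icc r 1, xst f r T = Δ * x := by
    intro x hx
    have hx' := (hJd x hx).1
    refine intermediate_value_Icc' hr1.le hcont ⟨?_, ?_⟩
    · simp only [hf.xst_one]; exact mul_nonneg hJ.le hx'.1.le
    · simp only [hf.xst_self]; exact mul_le_of_le_one_right hJ.le hx'.2.le
  choose! T hTm hTx using hT
  have hN : ∀ t ∈ J.image T, r < t ∧ t < 1 ∧ 0 < xst f r t ∧
        ∀ s ∈ Icc (0:ℝ) 1, xst f r s = xst f r t → s = t := by
    intro t ht
    obtain ⟨x, hx, rfl⟩ := Finset.mem_image.1 ht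
    have hx' := (hJd x hx).1
    have hpos : 0 < xst f r (T x) := by rw [hTx x hx]; exact mul_pos hJ hx'.1
    refine ⟨(hTm x hx).1.lt_of_ne ?_, (hTm x hx).2.lt_of_ne ?_, hpos, fun s hs hst => ?_⟩
    · intro h
      have := hTx x hx
      rw [← h, hf.xst_self] at this
      nlinarith [hx'.2]
    · intro h
      rw [h, hf.xst_one] at hpos
      exact hpos.ne rfl
    · by_contra hne
      have := hu s hs (T x) ⟨hr0.trans (hTm x hx).1, (hTm x hx).2⟩ hne hst hpos
      rw [hTx x hx, mul_div_cancel_left₀ _ hJ.ne'] at this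
      exact (hJd x hx).2 this
  have hUC := isCompact_Icc.uniformContinuousOn_of_continuous hcont
  rw [Metric.uniformContinuousOn_iff] at hUC
  obtain ⟨ω, hω, hUC⟩ := hUC (min (ε / 2) (δ * Δ / 4)) (by positivity)
  refine ⟨J.image T, hN, ω / 2, by positivity, fun ω' hω' => ?_⟩
  have hβ : ∀ᶠ β in 𝓝[>] (0:ℝ), β ∈ Ioo 0 (min (δ / 2) ε) ∧ ∀ t ∈ J.image T,
      xst f r (min (t + ω') 1) / Δ + β < xst f r t / Δ ∧
      (r ≤ t - ω' → xst f r t / Δ + β < xst f r (t - ω') / Δ) := by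
    refine Eventually.and (Ioo_mem_nhdsGT (by positivity))
      ((Finset.eventually_all _).2 fun t ht => ?_)
    obtain ⟨h1, h2, h3, h4⟩ := hN t ht
    refine Filter.Eventually.and (eventually_add_lt ?_) ?_
    · have hlt : t < min (t + ω') 1 := lt_min (by linarith) h2
      refine div_lt_div_of_pos_right (lt_of_le_of_ne (hf.xst_anti h1.le hlt.le) fun h => ?_) hJ
      exact hlt.ne' (h4 _ ⟨by linarith, min_le_right _ _⟩ h)
    · by_cases hrt : r ≤ t - ω'
      · refine (eventually_add_lt (div_lt_div_of_pos_right
          (lt_of_le_of_ne (hf.xst_anti hrt (by linarith)) fun h => ?_) hJ)).mono fun β h _ => h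
        have := h4 _ ⟨hr0.trans hrt, by linarith⟩ h.symm
        linarith
      · exact Eventually.of_forall fun β h => absurd h hrt
  obtain ⟨β, ⟨hβ0, hβ1⟩, hβN⟩ := hβ.exists
  obtain ⟨hβδ, hβε⟩ := lt_min_iff.1 hβ1
  obtain ⟨κ, hκ, hcκ⟩ := hc (β / 4) (by positivity)
  filter_upwards [Ioo_mem_nhdsGT (show 0 < min (min (β * Δ / 8) (ε / 4)) (min (Δ / 4) (κ / 2))
    by positivity)] with η hη g hg hfg
  obtain ⟨hη0, hη⟩ := hη
  simp only [lt_min_iff] at hη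
  obtain ⟨⟨hη1, hη2⟩, hη3, hη4⟩ := hη
  have hJJ := abs_le.1 (hf.jump_dist_le hg hfg r)
  rw [← hΔ] at hJJ
  have hJ' : 0 < jump g r := by linarith
  refine ⟨hJ', ?_⟩
  set Δ' := jump g r with hΔ'
  obtain ⟨σ, hσ, hσν⟩ := exists_of_skorC_lt (c := β / 2)
    ((hcκ Δ' hJ' (abs_le.2 ⟨by linarith, by linarith⟩)).trans_lt (by linarith))
  have hY : ∀ s, |σ (xst g r s / Δ') - xst f r s / Δ| ≤ β := by
    intro s
    have h1 := (hσν _ (div_jump_mem hg hJ' s)).1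
    have h2 := abs_xst_div_jump_sub_le hf hg hfg hJ hJ' s
    have h3 : 4 * η / Δ ≤ β / 2 := by
      rw [div_le_iff₀ hJ]; linarith
    refine (abs_sub_le _ (xst g r s / Δ') _).trans ?_
    linarith
  have ha : ∀ t, ∃ a, r ≤ a ∧ ∀ s, r ≤ s → (σ (xst g r s / Δ') ≤ xst f r t / Δ ↔ a ≤ s) := by
    intro t
    obtain ⟨ξ, hξ, hξt⟩ := hσ.2.surjOn (div_jump_mem hf hJ t)
    obtain ⟨a, ha, has⟩ := exists_first_hit hg (z := Δ' * ξ) hr1.le (mul_nonneg hJ'.le hξ.1)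
    refine ⟨a, ha, fun s hs => ?_⟩
    rw [← has s hs, show xst f r t / Δ = σ ξ from hξt.symm, hσ.1.le_iff_le (div_jump_mem hg hJ' s) hξ, div_le_iff₀ hJ',
      mul_comm]
  choose a har ha using ha
  refine ⟨a, fun t ht => ?_, fun θ hθ hθr hθm hθN hθω s hs => ?_⟩
  · obtain ⟨h1, h2, -, -⟩ := hN t ht
    obtain ⟨h5, h6⟩ := hβN t ht
    refine abs_le.2 ⟨?_, ?_⟩
    · by_contra hlt
      have hrt : r ≤ t - ω' := by linarith [har t]
      have h7 := (ha t (t - ω') hrt).2 (by linarith)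
      have h8 := abs_le.1 (hY (t - ω'))
      linarith [h6 hrt]
    · have hle : r ≤ min (t + ω') 1 := le_min (by linarith) hr1.le
      have h8 := abs_le.1 (hY (min (t + ω') 1))
      have := (ha t _ hle).1 (by linarith)
      linarith [min_le_left (t + ω') 1]
  · have hmapσ : ∀ u, φ Δ (σ (xst g r u / Δ')) ∈ Icc (0:ℝ) 1 := fun u =>
      hφ.mapsTo Δ hJ _ (hσ.2.mapsTo (div_jump_mem hg hJ' u))
    have hmapg : ∀ u, φ Δ' (xst g r u / Δ') ∈ Icc (0:ℝ) 1 := fun u =>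
      hφ.mapsTo Δ' hJ' _ (div_jump_mem hg hJ' u)
    have hmapf : ∀ u, φ Δ (xst f r u / Δ) ∈ Icc (0:ℝ) 1 := fun u =>
      hφ.mapsTo Δ hJ _ (div_jump_mem hf hJ u)
    have hcν : ∀ u, cdist (φ Δ (σ (xst g r u / Δ'))) (φ Δ' (xst g r u / Δ')) ≤ β / 2 :=
      fun u => by rw [cdist_comm]; exact (hσν _ (div_jump_mem hg hJ' u)).2
    rcases lt_or_ge s r with hsr | hsr
    · have hθs : θ s < r := hθr ▸ hθ hsr
      have h := hcν (θ s)
      rw [IsExcursion.xst_of_lt hsr, IsExcursion.xst_of_lt hθs, zero_div, zero_div]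
      rw [IsExcursion.xst_of_lt hθs, zero_div, hσ.map_zero] at h
      exact ⟨by simpa using hε.le, by linarith⟩
    · have hrθ : r ≤ θ s := hθr ▸ hθ.monotone hsr
      have hθs := hθm hs
      have hclose : |xst f r (θ s) - xst f r s| < min (ε / 2) (δ * Δ / 4) := by
        refine hUC (θ s) ⟨hrθ, hθs.2⟩ s ⟨hsr, hs.2⟩ ?_
        rw [Real.dist_eq]
        linarith [hθω s]
      obtain ⟨hcl1, hcl2⟩ := lt_min_iff.1 hclose
      have hfg' := hf.xst_dist_le hg hfg r (θ s)
      refine ⟨?_, ?_⟩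
      · rw [abs_sub_comm] at hcl1
        linarith [abs_sub_le (xst f r s) (xst f r (θ s)) (xst g r (θ s))]
      · have hcl3 : |xst f r s / Δ - xst f r (θ s) / Δ| ≤ δ / 4 := by
          rw [← sub_div, abs_div, abs_of_pos hJ, abs_sub_comm, div_le_iff₀ hJ]
          linarith
        have hlt : |xst f r s / Δ - σ (xst g r (θ s) / Δ')| < δ := by
          have h1 := hY (θ s)
          rw [abs_sub_comm] at h1
          linarith [abs_sub_le (xst f r s / Δ) (xst f r (θ s) / Δ) (σ (xst g r (θ s) / Δ'))]
        have hmain : cdist (φ Δ (xst f r s / Δ)) (φ Δ (σ (xst g r (θ s) / Δ'))) < ε / 2 := by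
          refine (hsep _ (div_jump_mem hf hJ s) _ (hσ.2.mapsTo (div_jump_mem hg hJ' (θ s)))
            hlt).resolve_right ?_
          rintro ⟨x, hx, hcase⟩
          have hmem := Finset.mem_image_of_mem T hx
          obtain ⟨h1, h2, -, h4⟩ := hN _ hmem
          have hxT : x = xst f r (T x) / Δ := by
            rw [hTx x hx, mul_div_cancel_left₀ _ hJ.ne']
          have hs1 : xst f r s / Δ ≤ x ↔ T x ≤ s := by
            conv_lhs => rw [hxT]
            rw [div_le_div_iff_of_pos_right hJ]
            refine ⟨fun h => ?_, fun h => hf.xst_anti h1.le h⟩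
            by_contra hlt
            have := h4 s hs (h.antisymm (hf.xst_anti hsr (not_le.1 hlt).le))
            exact hlt this.ge
          have hs2 : σ (xst g r (θ s) / Δ') ≤ x ↔ T x ≤ s := by
            conv_lhs => rw [hxT]
            rw [ha (T x) (θ s) hrθ, ← hθN _ hmem, hθ.le_iff_le]
          rcases hcase with ⟨h, h'⟩ | ⟨h, h'⟩
          · exact h'.not_ge (hs2.2 (hs1.1 h))
          · exact h'.not_ge (hs1.2 (hs2.1 h))
        refine (cdist_triangle (hmapf s) (hmapσ (θ s)) (hmapg (θ s))).trans ?_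
        linarith [hcν (θ s)]

theorem abs_infIcc_sub_comp_le {f g θ : ℝ → ℝ} (hf : IsExcursion f) (hg : IsExcursion g)
    (hθ : Monotone θ) (hθc : Continuous θ) {s t c : ℝ} (hst : s ≤ t)
    (h : ∀ u ∈ Icc s t, |f u - g (θ u)| ≤ c) :
    |infIcc f s t - infIcc g (θ s) (θ t)| ≤ c := by
  have h1 : infIcc f s t - c ≤ infIcc g (θ s) (θ t) := by
    refine IsExcursion.le_infIcc (hθ hst) fun v hv => ?_
    obtain ⟨u, hu, rfl⟩ := intermediate_value_Icc hst hθc.continuousOn hv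
    linarith [abs_le.1 (h u hu), hf.infIcc_le hu]
  have h2 : infIcc g (θ s) (θ t) - c ≤ infIcc f s t := by
    refine IsExcursion.le_infIcc hst fun u hu => ?_
    linarith [abs_le.1 (h u hu), hg.infIcc_le (u := θ u) ⟨hθ hu.1, hθ hu.2⟩]
  exact abs_le.2 ⟨by linarith, by linarith⟩

theorem abs_loopTerm_sub_le {φ : ℝ → ℝ → ℝ} (hφ : IsShuffle φ) {f g : ℝ → ℝ}
    (hf : IsExcursion f) (hg : IsExcursion g) {η C e r s t s' t' : ℝ} (hC : ∀ t, f t ≤ C)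
    (h : ∀ s, |f s - g s| ≤ η) (hJ : 0 < jump f r) (hJ' : 0 < jump g r)
    (hs : |xst f r s - xst g r s'| ≤ e ∧ cdist (φ (jump f r) (xst f r s / jump f r))
                (φ (jump g r) (xst g r s' / jump g r)) ≤ e)
    (ht : |xst f r t - xst g r t'| ≤ e ∧ cdist (φ (jump f r) (xst f r t / jump f r))
                (φ (jump g r) (xst g r t' / jump g r)) ≤ e) :
    |loopTerm φ f s t r - loopTerm φ g s' t' r| ≤ 2 * η + (4 * C + 2) * e := by
  have hff := fun u => hφ.mapsTo _ hJ _ (div_jump_mem hf hJ u)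
  have hgg := fun u => hφ.mapsTo _ hJ' _ (div_jump_mem hg hJ' u)
  have hc := (abs_cdist_sub_le (hff s) (hff t) (hgg s') (hgg t')).trans (add_le_add hs.2 ht.2)
  have hc1 := cdist_nonneg (hgg s') (hgg t')
  have hc2 := cdist_le_half (φ (jump g r) (xst g r s' / jump g r))
    (φ (jump g r) (xst g r t' / jump g r))
  have hJJ := hf.jump_dist_le hg h r
  have hJC : jump f r ≤ C := (hf.jump_le r).trans (hC r)
  unfold loopTerm tdel
  rw [if_pos hJ, if_pos hJ']
  set c := cdist (φ (jump f r) (xst f r s / jump f r)) (φ (jump f r) (xst f r t / jump f r))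
  set c' := cdist (φ (jump g r) (xst g r s' / jump g r))
    (φ (jump g r) (xst g r t' / jump g r))
  have h1 : |jump f r * (c - c')| ≤ C * (2 * e) := by
    rw [abs_mul, abs_of_pos hJ]
    exact mul_le_mul hJC (by linarith) (abs_nonneg _) (hJ.le.trans hJC)
  have h2 : |(jump f r - jump g r) * c'| ≤ 2 * η * (1 / 2) := by
    rw [abs_mul, abs_of_nonneg hc1]
    exact mul_le_mul hJJ hc2 hc1 ((abs_nonneg _).trans hJJ)
  have h3 : |(|xst g r s' - xst g r t'| - |xst f r s - xst f r t|)| ≤ 2 * e := by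
    refine (abs_abs_sub_abs_le _ _).trans ?_
    have := abs_le.1 hs.1
    have := abs_le.1 ht.1
    exact abs_le.2 ⟨by linarith, by linarith⟩
  have h1 := abs_le.1 h1
  have h2 := abs_le.1 h2
  have h3 := abs_le.1 h3
  exact abs_le.2 ⟨by linarith, by linarith⟩

/-- A time at which `xst f r` takes a value that it takes only once is not a jump time. -/
theorem jump_eq_zero_of_unique {f : ℝ → ℝ} (hf : IsExcursion f) {r T : ℝ} (hr : 0 ≤ r)
    (hrT : r < T) (hT : T < 1) (hu : ∀ s ∈ Icc (0:ℝ) 1, xst f r s = xst f r T → s = T) :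
    jump f T = 0 := by
  by_contra hne
  have hJ : 0 < jump f T := (hf.jump_nonneg' T).lt_of_ne' hne
  have hev := (hf.tendsto_right T).eventually (lt_mem_nhds (sub_pos.1 hJ))
  obtain ⟨u, hTu, hu'⟩ := mem_nhdsGT_iff_exists_Ioo_subset.1 hev
  have hm : T < min u 1 := lt_min hTu hT
  have h1 := min_le_left u 1
  have h2 := min_le_right u 1
  have hpre : pre f T ((T + min u 1) / 2) := by
    refine ⟨by linarith, IsExcursion.le_infIcc (by linarith) fun v hv => ?_⟩
    rcases hv.1.eq_or_lt with rfl | hlt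
    · exact hf.lm_le _
    · exact (hu' ⟨hlt, by linarith [hv.2]⟩ : lm f T < f v).le
  have := hu _ ⟨by linarith, by linarith⟩ (hf.xst_eq_of_pre hrT hpre)
  linarith

theorem exists_time_change {φ : ℝ → ℝ → ℝ} (hφ : IsShuffle φ) {f : ℝ → ℝ} (hf : IsExcursion f)
    (hB1 : ∀ t ∈ Icc (0:ℝ) 1, 0 < jump f t → PhiContAt φ (jump f t))
    (hB2 : ∀ r ∈ Icc (0:ℝ) 1, ∀ s ∈ Icc (0:ℝ) 1, ∀ t ∈ Icc (0:ℝ) 1,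
        s ≠ t → 0 < jump f r → xst f r s = xst f r t → 0 < xst f r t →
        phiContAt (φ (jump f r)) (xst f r t / jump f r))
    {ε : ℝ} (hε : 0 < ε) :
    ∀ᶠ η in 𝓝[>] (0:ℝ), ∀ g, IsExcursion g → (∀ s, |f s - g s| ≤ η) →
      ∃ θ, IncBij θ ∧ (∀ x ∈ Icc (0:ℝ) 1, |θ x - x| ≤ ε) ∧
        ∀ s ∈ Icc (0:ℝ) 1, ∀ t ∈ Icc (0:ℝ) 1,
          |tdV φ f s t - tdV φ g (θ s) (θ t)| ≤ ε := by
  obtain ⟨C, hC, hfC⟩ := exists_bound hf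
  set ν := ε / (8 * (2 * C + 1)) with hν
  have hν0 : 0 < ν := by positivity
  have hνC : 2 * ν * (2 * C + 1) = ε / 4 := by rw [hν]; field_simp; norm_num
  obtain ⟨Δ₀, hΔ₀, hsmall⟩ := hφ.small ν hν0
  have hε1 : 0 < min (ε / 24) (Δ₀ / 2) := by positivity
  obtain ⟨δ, hδ, R, hR, hRc, hsep⟩ := exists_jump_partition hf hε1
  set ε₁ := min (ε / 24) (Δ₀ / 2)
  have hε11 : ε₁ ≤ ε / 24 := min_le_left _ _
  have hε12 : ε₁ ≤ Δ₀ / 2 := min_le_right _ _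
  set n : ℝ := (R.card : ℝ)
  have hn : 0 ≤ n := Nat.cast_nonneg _
  set e := ε / (4 * (n + 1) * (4 * C + 2)) with he
  have he0 : 0 < e := by positivity
  have hne : n * ((4 * C + 2) * e) ≤ ε / 4 := by
    have h1 : (n + 1) * ((4 * C + 2) * e) = ε / 4 := by rw [he]; field_simp
    have h2 : 0 ≤ (4 * C + 2) * e := by positivity
    linarith
  have hRm : ∀ r ∈ R, r ∈ Ico (0:ℝ) 1 := fun r hr => hf.mem_of_jump_pos (hR r hr)
  have htr := fun r hr => exists_loop_tracking hφ hf (hR r hr)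
    (hB1 r (Ico_subset_Icc_self (hRm r hr)) (hR r hr))
    (fun s hs t ht hst => hB2 r (Ico_subset_Icc_self (hRm r hr)) s hs t ht hst (hR r hr)) he0
  choose! N hN ω hω hev using htr
  have hw : ∀ᶠ w in 𝓝[>] (0:ℝ), w ∈ Ioo 0 (min δ ε) ∧ ∀ r ∈ R, w ∈ Ioo 0 (ω r) :=
    Eventually.and (Ioo_mem_nhdsGT (by positivity))
      ((Finset.eventually_all _).2 fun r hr => Ioo_mem_nhdsGT (hω r hr))
  obtain ⟨w, ⟨hw0, hw1⟩, hwR⟩ := hw.exists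
  obtain ⟨hwδ, hwε⟩ := lt_min_iff.1 hw1
  have hown : ∀ T ∈ R.biUnion N, ∃ r ∈ R, T ∈ N r := fun T hT => Finset.mem_biUnion.1 hT
  choose! own hownR hownN using hown
  have hlt : ∀ r₁ ∈ R, ∀ r₂ ∈ R, ∀ T, T ∈ N r₁ → T ∈ N r₂ → ¬ r₁ < r₂ := by
    intro r₁ h₁ r₂ h₂ T hT₁ hT₂ hlt
    obtain ⟨h3, -, h5, -⟩ := hN r₂ h₂ T hT₂
    exact h3.ne ((hN r₁ h₁ T hT₁).2.2.2 r₂ (Ico_subset_Icc_self (hRm r₂ h₂))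
      (hf.xst_eq_of_pre hlt (IsExcursion.pre_of_xst_pos h5)).symm)
  have hown' : ∀ r ∈ R, ∀ T ∈ N r, own T = r := by
    intro r hr T hT
    have hT' : T ∈ R.biUnion N := Finset.mem_biUnion.2 ⟨r, hr, hT⟩
    exact le_antisymm (not_lt.1 (hlt r hr _ (hownR T hT') T hT (hownN T hT')))
      (not_lt.1 (hlt _ (hownR T hT') r hr T (hownN T hT') hT))
  have hdisj : Disjoint (R.biUnion N) (insert 0 (insert 1 R)) := by
    rw [Finset.disjoint_left]
    intro T hT hT'
    obtain ⟨h1, h2, -, h4⟩ := hN _ (hownR T hT) T (hownN T hT)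
    have h0 := (hRm _ (hownR T hT)).1
    rcases Finset.mem_insert.1 hT' with rfl | hT'
    · linarith
    rcases Finset.mem_insert.1 hT' with rfl | hT'
    · exact lt_irrefl _ h2
    · exact (hR T hT').ne' (jump_eq_zero_of_unique hf h0 h1 h2 h4)
  obtain ⟨ω', hω', hdisp⟩ := exists_displacement _ _ hdisj hw0
  filter_upwards [(Finset.eventually_all R).2 fun r hr => hev r hr ω' hω',
    Ioo_mem_nhdsGT (show 0 < min (min 1 (Δ₀ / 4)) (ε / (4 * (8 + 2 * n))) by positivity)]
    with η hη1 hη2 g hg hfg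
  obtain ⟨hη0, hη2⟩ := hη2
  simp only [lt_min_iff] at hη2
  obtain ⟨⟨hη2, hη3⟩, hη4⟩ := hη2
  rw [lt_div_iff₀ (by positivity)] at hη4
  have htrack := fun r hr => hη1 r hr g hg hfg
  choose! hJ' a ha htrack using htrack
  obtain ⟨θ, hθ, hθc, hθR, hθN, hθw⟩ := hdisp (fun T => a (own T) T) fun T hT =>
    ha _ (hownR T hT) T (hownN T hT)
  have hθI : IncBij θ := incBij_of_strictMono hθ hθc (hθR 0 (by simp)) (hθR 1 (by simp))
  refine ⟨θ, hθI, fun x _ => (hθw x).trans hwε.le, ?_⟩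
  have htrack' : ∀ r ∈ R, ∀ s ∈ Icc (0:ℝ) 1, |xst f r s - xst g r (θ s)| ≤ e ∧
      cdist (φ (jump f r) (xst f r s / jump f r))
        (φ (jump g r) (xst g r (θ s) / jump g r)) ≤ e := by
    intro r hr
    refine htrack r hr θ hθ (hθR r (by simp [hr])) hθI.2.mapsTo (fun T hT => ?_) fun x =>
      (hθw x).trans (hwR r hr).2.le
    rw [hθN T (Finset.mem_biUnion.2 ⟨r, hr, hT⟩), hown' r hr T hT]
  have hosc : ∀ s ∈ Icc (0:ℝ) 1, |f s - g (θ s)| ≤ ε₁ + η := by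
    intro s hs
    have h1 : |f s - f (θ s)| < ε₁ := by
      refine (hsep s hs (θ s) (hθI.2.mapsTo hs) ?_).resolve_right ?_
      · rw [abs_sub_comm]; exact (hθw s).trans_lt hwδ
      · rintro ⟨r, hr, hcase⟩
        have hθr : θ r = r := hθR r (by simp [hr])
        rcases hcase with ⟨h1, h2⟩ | ⟨h1, h2⟩
        · have := hθ h1
          linarith
        · have := hθ.monotone h2
          linarith
    linarith [abs_sub_le (f s) (f (θ s)) (g (θ s)), hfg (θ s)]
  have hgC : ∀ t, g t ≤ C + 1 := fun t => by linarith [abs_le.1 (hfg t), hfC t]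
  have hgRc : ∀ r ∉ R, jump g r ≤ ε₁ + 2 * η := fun r hr => by
    linarith [abs_le.1 (hf.jump_dist_le hg hfg r), hRc r hr]
  have hsmall' : ∀ u, 0 < u → u ≤ ε₁ + 2 * η → ∀ x ∈ Ioc (0:ℝ) 1,
      |(2 / x) * cdist (φ u 0) (φ u x) - 1| ≤ ν := fun u hu hu' =>
    hsmall u hu (by linarith)
  intro s hs t ht
  have hs' := hθI.2.mapsTo hs
  have ht' := hθI.2.mapsTo ht
  have hκ : 0 ≤ ε₁ + 2 * η := by linarith
  have e1 := abs_le.1 (abs_tsum_loopTerm_sub_sum_le hφ hf hν0.le hκ hfC R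
    (fun r hr => (hRc r hr).trans (by linarith)) hsmall' hs.1 ht.1)
  have e2 := abs_le.1 (abs_tsum_loopTerm_sub_sum_le hφ hg hν0.le hκ hgC R hgRc hsmall' hs'.1
    ht'.1)
  have e3 : |∑ r ∈ R, loopTerm φ f s t r - ∑ r ∈ R, loopTerm φ g (θ s) (θ t) r| ≤
      n * (2 * η + (4 * C + 2) * e) := by
    rw [← Finset.sum_sub_distrib]
    refine (Finset.abs_sum_le_sum_abs _ _).trans ((Finset.sum_le_card_nsmul _ _ _ fun r hr =>
      abs_loopTerm_sub_le hφ hf hg hfC hfg (hR r hr) (hJ' r hr) (htrack' r hr s hs)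
        (htrack' r hr t ht)).trans_eq (nsmul_eq_mul _ _))
  have e3 := abs_le.1 e3
  have e4 : |infIcc f (min s t) (max s t) - infIcc g (min (θ s) (θ t)) (max (θ s) (θ t))| ≤
      ε₁ + η := by
    rw [← hθ.monotone.map_min, ← hθ.monotone.map_max]
    exact abs_infIcc_sub_comp_le hf hg hθ.monotone hθc min_le_max fun u hu =>
      hosc u ⟨(le_min hs.1 ht.1).trans hu.1, hu.2.trans (max_le hs.2 ht.2)⟩
  have e4 := abs_le.1 e4
  have e5 := abs_le.1 (hosc s hs)
  have e6 := abs_le.1 (hosc t ht)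
  rw [tdV_eq hφ hf hs.1 ht.1, tdV_eq hφ hg hs'.1 ht'.1]
  have hne' : n * (2 * η + (4 * C + 2) * e) ≤ 2 * n * η + ε / 4 := by linarith
  have hνC' : 2 * ν * C + 2 * ν * (C + 1) = ε / 4 := by linarith
  have hη5 : 8 * η + 2 * n * η < ε / 4 := by linarith
  exact abs_le.2 ⟨by linarith, by linarith⟩

section

variable {φ : ℝ → ℝ → ℝ} {g : ℝ → ℝ} (L : ℝ ≃o ℝ)

theorem lm_comp_orderIso (hg : IsExcursion g) (h0 : L 0 = 0) (t : ℝ) :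
    lm (fun x => g (L x)) t = lm g (L t) := by
  rcases eq_or_ne t 0 with rfl | ht
  · rw [h0, IsExcursion.lm_zero, IsExcursion.lm_zero]
  · rw [lm, if_neg ht]
    refine leftLim_eq_of_tendsto ((hg.tendsto_left (L t)).comp
      (tendsto_nhdsWithin_iff.2 ⟨L.continuous.continuousAt.mono_left nhdsWithin_le_nhds, ?_⟩))
    filter_upwards [self_mem_nhdsWithin] with x hx using L.strictMono hx

theorem jump_comp_orderIso (hg : IsExcursion g) (h0 : L 0 = 0) (t : ℝ) :
    jump (fun x => g (L x)) t = jump g (L t) := by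
  rw [jump, lm_comp_orderIso L hg h0, jump]

theorem infIcc_comp_orderIso (g : ℝ → ℝ) (s t : ℝ) :
    infIcc (fun x => g (L x)) s t = infIcc g (L s) (L t) := by
  rw [infIcc, infIcc, ← L.image_Icc, image_image]

theorem xst_comp_orderIso (hg : IsExcursion g) (h0 : L 0 = 0) (s t : ℝ) :
    xst (fun x => g (L x)) s t = xst g (L s) (L t) := by
  simp only [xst, infIcc_comp_orderIso, lm_comp_orderIso L hg h0, L.le_iff_le]

theorem loopTerm_comp_orderIso (hg : IsExcursion g) (h0 : L 0 = 0) (s t r : ℝ) :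
    loopTerm φ (fun x => g (L x)) s t r = loopTerm φ g (L s) (L t) (L r) := by
  simp only [loopTerm, tdel, xst_comp_orderIso L hg h0, jump_comp_orderIso L hg h0]

theorem isExcursion_comp_orderIso (hg : IsExcursion g) (h0 : L 0 = 0) (h1 : L 1 = 1) :
    IsExcursion fun x => g (L x) := by
  have hz : ∀ t, 0 ≤ L t ↔ 0 ≤ t := fun t => by
    conv_lhs => rw [← h0]
    exact L.le_iff_le
  have ho : ∀ t, L t ≤ 1 ↔ t ≤ 1 := fun t => by
    conv_lhs => rw [← h1]
    exact L.le_iff_le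
  refine ⟨fun t _ => hg.nonneg' _, fun t ht => hg.zero_outside _ fun h => ht ?_, fun t _ => ?_,
    fun t ht => ?_, by rw [h1]; exact hg.one, fun t _ => ?_⟩
  · exact ⟨(hz t).1 h.1, (ho t).1 h.2⟩
  · refine (hg.tendsto_right (L t)).comp
      (tendsto_nhdsWithin_iff.2 ⟨L.continuous.continuousAt.mono_left nhdsWithin_le_nhds, ?_⟩)
    filter_upwards [self_mem_nhdsWithin] with x hx using L.strictMono hx
  · have hl := lm_comp_orderIso L hg h0 t
    rw [lm, if_neg ht.1.ne'] at hl
    rw [hl]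
    refine (hg.tendsto_left (L t)).comp
      (tendsto_nhdsWithin_iff.2 ⟨L.continuous.continuousAt.mono_left nhdsWithin_le_nhds, ?_⟩)
    filter_upwards [self_mem_nhdsWithin] with x hx using L.strictMono hx
  · rw [jump_comp_orderIso L hg h0]; exact hg.jump_nonneg' _

theorem tdV_comp_orderIso (hφ : IsShuffle φ) (hg : IsExcursion g) (h0 : L 0 = 0) (h1 : L 1 = 1)
    {s t : ℝ} (hs : 0 ≤ s) (ht : 0 ≤ t) :
    tdV φ (fun x => g (L x)) s t = tdV φ g (L s) (L t) := by
  rw [tdV_eq hφ (isExcursion_comp_orderIso L hg h0 h1) hs ht,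
    tdV_eq hφ hg (h0 ▸ L.monotone hs) (h0 ▸ L.monotone ht), infIcc_comp_orderIso,
    L.monotone.map_min, L.monotone.map_max]
  congr 1
  simp only [loopTerm_comp_orderIso L hg h0]
  exact L.toEquiv.tsum_eq fun r => loopTerm φ g (L s) (L t) r

end

theorem statement15 (φ : ℝ → ℝ → ℝ) (hφ : IsShuffle φ) (f : ℝ → ℝ) (hf : IsExcursion f)
    (hB1 : ∀ t ∈ Icc (0:ℝ) 1, 0 < jump f t → PhiContAt φ (jump f t))
    (hB2 : ∀ r ∈ Icc (0:ℝ) 1, ∀ s ∈ Icc (0:ℝ) 1, ∀ t ∈ Icc (0:ℝ) 1,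
        s ≠ t → 0 < jump f r → xst f r s = xst f r t → 0 < xst f r t →
        phiContAt (φ (jump f r)) (xst f r t / jump f r)) :
    ∀ ε > (0:ℝ), ∃ η > (0:ℝ), ∀ g : ℝ → ℝ, IsExcursion g → skor f g ≤ η →
      rho2 (tdV φ f) (tdV φ g) ≤ ε := by
  intro ε hε
  obtain ⟨η, hη, hη0, hηε⟩ := ((exists_time_change hφ hf hB1 hB2 (half_pos hε)).and
    (Ioo_mem_nhdsGT (half_pos hε))).exists
  refine ⟨η / 2, half_pos hη0, fun g hg hfg => ?_⟩
  obtain ⟨l, hl, hlη⟩ := exists_of_skor_lt hf hg (hfg.trans_lt (half_lt_self hη0))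
  obtain ⟨L, hL, hL'⟩ := hl.exists_orderIso
  have h0 : L 0 = 0 := (hL 0 (by simp)).trans hl.map_zero
  have h1 : L 1 = 1 := (hL 1 (by simp)).trans hl.map_one
  have hclose : ∀ s, |f s - g (L s)| ≤ η := by
    intro s
    by_cases hs : s ∈ Icc (0:ℝ) 1
    · rw [hL s hs]; exact (hlη s hs).2
    · rw [hL' s hs, hf.zero_outside s hs, hg.zero_outside s hs, sub_zero, abs_zero]
      exact hη0.le
  obtain ⟨θ, hθ, hθε, hV⟩ := hη _ (isExcursion_comp_orderIso L hg h0 h1) hclose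
  have hdist : ∀ x ∈ Icc (0:ℝ) 1, |l (θ x) - x| ≤ ε := fun x hx => by
    linarith [abs_sub_le (l (θ x)) (θ x) x, hθε x hx, (hlη _ (hθ.2.mapsTo hx)).1]
  refine csInf_le ⟨0, fun c hc => hc.1⟩ ⟨hε.le, fun x => l (θ x), fun x => l (θ x), hl.comp hθ,
    hl.comp hθ, fun x hx => ⟨hdist x hx, hdist x hx⟩, fun s hs t ht => ?_⟩
  have hs' := hθ.2.mapsTo hs
  have ht' := hθ.2.mapsTo ht
  have h := hV s hs t ht
  rw [tdV_comp_orderIso L hφ hg h0 h1 hs'.1 ht'.1, hL _ hs', hL _ ht'] at h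
  exact h.trans (half_le_self hε.le)
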